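/- arXiv:1606.07799 — 2 statements merged into one kernel-verified Lean document; each statement's English description precedes it below -/
import Mathlib

section
/- Every degree-zero Z-algebra automorphism of the Z-algebra associated to the generalized Weyl algebra A(f), f = z(z+α) quadratic, is inner. -/
open Polynomial

noncomputable section

/-- The defining relations of the generalized Weyl algebra `A(f)` over `k[z]` with
`σ(z) = z + 1`: `xz = σ(z)x`, `yz = σ⁻¹(z)y`, `xy = f`, `yx = σ⁻¹(f)`.
Generators: `0 ↦ x`, `1 ↦ y`, `2 ↦ z`. -/
inductive gwaRel (k : Type) [Field k] (f : Polynomial k) :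
    FreeAlgebra k (Fin 3) → FreeAlgebra k (Fin 3) → Prop
  | xz : gwaRel k f (FreeAlgebra.ι k 0 * FreeAlgebra.ι k 2)
      ((FreeAlgebra.ι k 2 + 1) * FreeAlgebra.ι k 0)
  | yz : gwaRel k f (FreeAlgebra.ι k 1 * FreeAlgebra.ι k 2)
      ((FreeAlgebra.ι k 2 - 1) * FreeAlgebra.ι k 1)
  | xy : gwaRel k f (FreeAlgebra.ι k 0 * FreeAlgebra.ι k 1)
      (aeval (FreeAlgebra.ι k 2) f)
  | yx : gwaRel k f (FreeAlgebra.ι k 1 * FreeAlgebra.ι k 0)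
      (aeval (FreeAlgebra.ι k 2) (f.comp (X - 1)))

/-- The generalized Weyl algebra `A(f) = k[z]⟨x,y⟩ / (xz-σ(z)x, yz-σ⁻¹(z)y, xy-f, yx-σ⁻¹(f))`. -/
abbrev GWA (k : Type) [Field k] (f : Polynomial k) := RingQuot (gwaRel k f)

def gwaX (k : Type) [Field k] (f : Polynomial k) : GWA k f :=
  RingQuot.mkAlgHom k (gwaRel k f) (FreeAlgebra.ι k 0)

def gwaY (k : Type) [Field k] (f : Polynomial k) : GWA k f :=
  RingQuot.mkAlgHom k (gwaRel k f) (FreeAlgebra.ι k 1)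

def gwaZ (k : Type) [Field k] (f : Polynomial k) : GWA k f :=
  RingQuot.mkAlgHom k (gwaRel k f) (FreeAlgebra.ι k 2)

/-- The canonical `k[z]`-module generator of the degree-`n` component of `A(f)`:
`xⁿ` for `n ≥ 0` and `y⁻ⁿ` for `n < 0`. -/
def gwaMon (k : Type) [Field k] (f : Polynomial k) (n : ℤ) : GWA k f :=
  if 0 ≤ n then gwaX k f ^ n.toNat else gwaY k f ^ (-n).toNat

/-- The degree-`n` component of `A(f)` (as a `k`-subspace): the left `k[z]`-span of the
canonical monomial `mₙ`.  The `(i,j)` component of the associated `ℤ`-algebra `Ā` is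
`Ā_{i,j} = A_{j−i}`, and the `ℤ`-algebra multiplication `Ā_{i,j} × Ā_{j,l} → Ā_{i,l}`
is multiplication in `A`. -/
def gwaComp (k : Type) [Field k] (f : Polynomial k) (n : ℤ) : Submodule k (GWA k f) :=
  Submodule.span k {w | ∃ q : Polynomial k, w = aeval (gwaZ k f) q * gwaMon k f n}

section Representation

variable (k : Type) [Field k] (f : Polynomial k)

lemma aeval_lmul_X (q : Polynomial k) :
    aeval (Algebra.lmul k (Polynomial k) X) q = Algebra.lmul k (Polynomial k) q := by
  rw [aeval_algHom_apply, aeval_X_left_apply]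

/-- The representation of `A(f)` on `k[z]` in which `z` acts by multiplication, `x` by the shift
`p(z) ↦ p(z + 1)` and `y` by `p(z) ↦ f(z - 1) p(z - 1)`. -/
def gwaRep : GWA k f →ₐ[k] Module.End k (Polynomial k) :=
  RingQuot.liftAlgHom k ⟨FreeAlgebra.lift k
    ![(aeval (X + 1 : Polynomial k)).toLinearMap,
      Algebra.lmul k (Polynomial k) (f.comp (X - 1)) * (aeval (X - 1 : Polynomial k)).toLinearMap,
      Algebra.lmul k (Polynomial k) X], by
    intro a b h
    cases h <;> refine LinearMap.ext fun p => ?_ <;>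
      simp only [← aeval_algHom_apply, map_mul, map_add, map_sub, map_one, FreeAlgebra.lift_ι_apply,
        Matrix.cons_val, aeval_lmul_X] <;>
      simp [← comp_eq_aeval, Polynomial.comp_assoc, add_mul, sub_mul, mul_sub, mul_left_comm]⟩

lemma gwaRep_X (p : Polynomial k) : gwaRep k f (gwaX k f) p = p.comp (X + 1) := by
  simp [gwaRep, gwaX, comp_eq_aeval]

lemma gwaRep_Y (p : Polynomial k) :
    gwaRep k f (gwaY k f) p = f.comp (X - 1) * p.comp (X - 1) := by
  simp [gwaRep, gwaY, comp_eq_aeval]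

lemma gwaRep_aeval (q p : Polynomial k) :
    gwaRep k f (aeval (gwaZ k f) q) p = q * p := by
  have h : gwaRep k f (gwaZ k f) = Algebra.lmul k (Polynomial k) X := by
    simp [gwaRep, gwaZ]
  rw [← aeval_algHom_apply, h, aeval_lmul_X, Algebra.coe_lmul_eq_mul, LinearMap.mul_apply']

end Representation

section Relations

variable {k : Type} [Field k] (f : Polynomial k)

lemma comp_X_add_one_ne_zero {p : Polynomial k} (hp : p ≠ 0) : p.comp (X + 1) ≠ 0 := by
  intro h
  have := congrArg (fun q => q.comp (X - 1)) h
  simp [comp_assoc] at this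
  exact hp this

lemma comp_X_sub_one_ne_zero {p : Polynomial k} (hp : p ≠ 0) : p.comp (X - 1) ≠ 0 := by
  intro h
  have := congrArg (fun q => q.comp (X + 1)) h
  simp [comp_assoc] at this
  exact hp this

lemma gwaX_mul_gwaZ : gwaX k f * gwaZ k f = (gwaZ k f + 1) * gwaX k f := by
  simpa [gwaX, gwaZ] using RingQuot.mkAlgHom_rel k (gwaRel.xz (k := k) (f := f))

lemma gwaY_mul_gwaZ : gwaY k f * gwaZ k f = (gwaZ k f - 1) * gwaY k f := by
  simpa [gwaY, gwaZ] using RingQuot.mkAlgHom_rel k (gwaRel.yz (k := k) (f := f))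

lemma gwaX_mul_gwaY : gwaX k f * gwaY k f = aeval (gwaZ k f) f := by
  have := RingQuot.mkAlgHom_rel k (gwaRel.xy (k := k) (f := f))
  rwa [map_mul, ← aeval_algHom_apply] at this

lemma gwaY_mul_gwaX : gwaY k f * gwaX k f = aeval (gwaZ k f) (f.comp (X - 1)) := by
  have := RingQuot.mkAlgHom_rel k (gwaRel.yx (k := k) (f := f))
  rwa [map_mul, ← aeval_algHom_apply] at this

lemma gwaX_mul_aeval (q : Polynomial k) :
    gwaX k f * aeval (gwaZ k f) q = aeval (gwaZ k f) (q.comp (X + 1)) * gwaX k f := by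
  induction q using Polynomial.induction_on' with
  | add p q hp hq => simp only [map_add, mul_add, add_comp, add_mul, hp, hq]
  | monomial n a =>
    induction n with
    | zero => simp [Algebra.commutes]
    | succ n ih =>
      rw [← monomial_mul_X, map_mul, ← mul_assoc, ih, mul_comp, map_mul, aeval_X, mul_assoc,
        gwaX_mul_gwaZ, ← mul_assoc]
      simp

lemma gwaY_mul_aeval (q : Polynomial k) :
    gwaY k f * aeval (gwaZ k f) q = aeval (gwaZ k f) (q.comp (X - 1)) * gwaY k f := by
  induction q using Polynomial.induction_on' with
  | add p q hp hq => simp only [map_add, mul_add, add_comp, add_mul, hp, hq]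
  | monomial n a =>
    induction n with
    | zero => simp [Algebra.commutes]
    | succ n ih =>
      rw [← monomial_mul_X, map_mul, ← mul_assoc, ih, mul_comp, map_mul, aeval_X, mul_assoc,
        gwaY_mul_gwaZ, ← mul_assoc]
      simp

lemma gwaMon_natCast (n : ℕ) : gwaMon k f n = gwaX k f ^ n := by simp [gwaMon]

lemma gwaMon_neg_natCast (n : ℕ) : gwaMon k f (-n) = gwaY k f ^ n := by
  rcases n with _ | n
  · simp [gwaMon]
  · rw [gwaMon, if_neg (by omega)]; simp

lemma gwaMon_zero : gwaMon k f 0 = 1 := by simp [gwaMon]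

lemma gwaMon_one : gwaMon k f 1 = gwaX k f := by simp [gwaMon]

lemma gwaMon_neg_one : gwaMon k f (-1) = gwaY k f := by simp [gwaMon]

lemma mem_gwaComp {n : ℤ} {w : GWA k f} :
    w ∈ gwaComp k f n ↔ ∃ q : Polynomial k, w = aeval (gwaZ k f) q * gwaMon k f n := by
  refine ⟨fun hw => ?_, fun hw => Submodule.subset_span hw⟩
  induction hw using Submodule.span_induction with
  | mem w hw => exact hw
  | zero => exact ⟨0, by simp⟩
  | add v w _ _ hv hw =>
    obtain ⟨p, rfl⟩ := hv
    obtain ⟨q, rfl⟩ := hw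
    exact ⟨p + q, by simp [add_mul]⟩
  | smul c w _ hw =>
    obtain ⟨p, rfl⟩ := hw
    exact ⟨c • p, by simp⟩

lemma gwaX_mul_gwaMon (hf : f ≠ 0) (n : ℤ) :
    ∃ p : Polynomial k, p ≠ 0 ∧
      gwaX k f * gwaMon k f n = aeval (gwaZ k f) p * gwaMon k f (n + 1) := by
  obtain ⟨m, rfl | rfl⟩ := n.eq_nat_or_neg
  · exact ⟨1, one_ne_zero, by rw_mod_cast [gwaMon_natCast, gwaMon_natCast, pow_succ']; simp⟩
  · rcases m with _ | m
    · exact ⟨1, one_ne_zero, by simp [gwaMon]⟩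
    · refine ⟨f, hf, ?_⟩
      rw [show -((m + 1 : ℕ) : ℤ) + 1 = -(m : ℤ) by push_cast; ring, gwaMon_neg_natCast,
        gwaMon_neg_natCast, pow_succ', ← mul_assoc, gwaX_mul_gwaY]

lemma gwaY_mul_gwaMon (hf : f ≠ 0) (n : ℤ) :
    ∃ p : Polynomial k, p ≠ 0 ∧
      gwaY k f * gwaMon k f n = aeval (gwaZ k f) p * gwaMon k f (n - 1) := by
  obtain ⟨m, rfl | rfl⟩ := n.eq_nat_or_neg
  · rcases m with _ | m
    · exact ⟨1, one_ne_zero, by simp [gwaMon]⟩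
    · refine ⟨f.comp (X - 1), comp_X_sub_one_ne_zero hf, ?_⟩
      rw [show ((m + 1 : ℕ) : ℤ) - 1 = (m : ℤ) by push_cast; ring, gwaMon_natCast,
        gwaMon_natCast, pow_succ', ← mul_assoc, gwaY_mul_gwaX]
  · refine ⟨1, one_ne_zero, ?_⟩
    rw [show -(m : ℤ) - 1 = -((m + 1 : ℕ) : ℤ) by push_cast; ring, gwaMon_neg_natCast,
      gwaMon_neg_natCast, pow_succ']
    simp

/-- The product of two canonical monomials is a nonzero `k[z]`-multiple of the canonical monomial
of the total degree. -/
lemma gwaMon_mul_gwaMon (hf : f ≠ 0) (m n : ℤ) :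
    ∃ p : Polynomial k, p ≠ 0 ∧
      gwaMon k f m * gwaMon k f n = aeval (gwaZ k f) p * gwaMon k f (m + n) := by
  obtain ⟨a, rfl | rfl⟩ := m.eq_nat_or_neg
  · rw [gwaMon_natCast]
    induction a with
    | zero => exact ⟨1, one_ne_zero, by simp⟩
    | succ a ih =>
      obtain ⟨p, hp, h⟩ := ih
      obtain ⟨q, hq, h'⟩ := gwaX_mul_gwaMon f hf (a + n)
      refine ⟨p.comp (X + 1) * q, mul_ne_zero (comp_X_add_one_ne_zero hp) hq, ?_⟩
      rw [pow_succ', mul_assoc, h, ← mul_assoc, gwaX_mul_aeval, mul_assoc, h', ← mul_assoc,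
        map_mul]
      congr 2
      push_cast; ring
  · rw [gwaMon_neg_natCast]
    induction a with
    | zero => exact ⟨1, one_ne_zero, by simp⟩
    | succ a ih =>
      obtain ⟨p, hp, h⟩ := ih
      obtain ⟨q, hq, h'⟩ := gwaY_mul_gwaMon f hf (-a + n)
      refine ⟨p.comp (X - 1) * q, mul_ne_zero (comp_X_sub_one_ne_zero hp) hq, ?_⟩
      rw [pow_succ', mul_assoc, h, ← mul_assoc, gwaY_mul_aeval, mul_assoc, h', ← mul_assoc,
        map_mul]
      congr 2
      push_cast; ring

lemma gwaRep_gwaMon_one_ne_zero (hf : f ≠ 0) (n : ℤ) :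
    gwaRep k f (gwaMon k f n) 1 ≠ 0 := by
  obtain ⟨a, rfl | rfl⟩ := n.eq_nat_or_neg
  · rw [gwaMon_natCast]
    induction a with
    | zero => simp
    | succ a ih =>
      rw [pow_succ', map_mul, Module.End.mul_apply, gwaRep_X]
      exact comp_X_add_one_ne_zero ih
  · rw [gwaMon_neg_natCast]
    induction a with
    | zero => simp
    | succ a ih =>
      rw [pow_succ', map_mul, Module.End.mul_apply, gwaRep_Y]
      exact mul_ne_zero (comp_X_sub_one_ne_zero hf) (comp_X_sub_one_ne_zero ih)

/-- Each homogeneous component of `A(f)` is a free `k[z]`-module on the canonical monomial. -/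
lemma aeval_mul_gwaMon_injective (hf : f ≠ 0) (n : ℤ) :
    Function.Injective fun q : Polynomial k => aeval (gwaZ k f) q * gwaMon k f n := by
  intro p q h
  have h' := congrArg (fun w => gwaRep k f w 1) h
  simp only [map_mul, Module.End.mul_apply, gwaRep_aeval] at h'
  exact mul_right_cancel₀ (gwaRep_gwaMon_one_ne_zero f hf n) h'

lemma aeval_gwaZ_mem (q : Polynomial k) : aeval (gwaZ k f) q ∈ gwaComp k f 0 :=
  (mem_gwaComp f).2 ⟨q, by simp [gwaMon_zero]⟩

lemma gwaMon_mem (n : ℤ) : gwaMon k f n ∈ gwaComp k f n :=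
  (mem_gwaComp f).2 ⟨1, by simp⟩

lemma aeval_gwaZ_injective (hf : f ≠ 0) : Function.Injective (aeval (R := k) (gwaZ k f)) := by
  simpa [gwaMon_zero] using aeval_mul_gwaMon_injective f hf 0

end Relations

section QuadraticSubstitution

variable {k : Type} [Field k]

lemma exists_eq_linear_of_comp_eq_X {p q : Polynomial k} (h : q.comp p = X) :
    ∃ a b : k, a ≠ 0 ∧ p = C a * X + C b := by
  have hd : q.natDegree * p.natDegree = 1 := by rw [← natDegree_comp, h, natDegree_X]
  have hp : p.natDegree = 1 := Nat.eq_one_of_mul_eq_one_left hd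
  obtain ⟨a, ha, b, hab⟩ := natDegree_eq_one.1 hp
  exact ⟨a, b, ha, hab.symm⟩

/-- If the affine substitution `z ↦ az + b` rescales `z(z + α)`, then it preserves the sum of
the roots. -/
lemma two_mul_add_of_quadratic_comp {α a b c : k} (ha : a ≠ 0)
    (h : (X * (X + C α)).comp (C a * X + C b) = C c * (X * (X + C α))) :
    2 * b + α = a * α := by
  have hform : C (a * a - c) * X ^ 2 + C (2 * a * b + a * α - c * α) * X + C (b * (b + α)) = 0 := by
    simp only [mul_comp, add_comp, X_comp, C_comp] at h
    simp only [map_sub, map_mul, map_add, map_ofNat]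
    linear_combination h
  have h2 := congrArg (fun p => coeff p 2) hform
  have h1 := congrArg (fun p => coeff p 1) hform
  simp only [coeff_add, coeff_C_mul, coeff_X_pow, coeff_X, coeff_C, coeff_zero] at h2 h1
  norm_num at h2 h1
  refine mul_left_cancel₀ ha ?_
  linear_combination h1 - α * h2

lemma eq_X_of_shift_of_quadratic_comp [CharZero k] {α a b a' b' c c' : k}
    (ha : a ≠ 0) (ha' : a' ≠ 0)
    (hshift : (C a' * X + C b').comp (X + 1) = C a * X + C b + 1)
    (h : (X * (X + C α)).comp (C a * X + C b) = C c * (X * (X + C α)))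
    (h' : (X * (X + C α)).comp (C a' * X + C b') = C c' * (X * (X + C α))) :
    a = 1 ∧ b = 0 := by
  have hs := two_mul_add_of_quadratic_comp ha h
  have hs' := two_mul_add_of_quadratic_comp ha' h'
  have h1 := congrArg (fun p => coeff p 1) hshift
  have h0 := congrArg (fun p => coeff p 0) hshift
  simp [coeff_X, coeff_C, coeff_one] at h1 h0
  subst h1
  have hb : b = b' := mul_left_cancel₀ (two_ne_zero (α := k)) (by linear_combination hs - hs')
  have ha1 : a' = 1 := by linear_combination h0 + hb
  refine ⟨ha1, mul_left_cancel₀ (two_ne_zero (α := k)) ?_⟩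
  rw [ha1] at hs
  linear_combination hs

end QuadraticSubstitution

set_option maxHeartbeats 1000000 in
/-- Every degree-zero `ℤ`-algebra automorphism of the `ℤ`-algebra `Ā`
associated to the generalized Weyl algebra `A(f)`, `f = z(z+α)` quadratic, is inner.
A degree-zero automorphism is given by a family `γ i j` of `k`-linear bijections of the
components `Ā_{i,j} = A_{j−i}` that is multiplicative and fixes the local units `1ᵢ`;
inner means there are `gₘ ∈ Ā_{m,m}` and `hₙ ∈ Ā_{n,n}` with `γ(w) = gₘ w hₙ` for all
`w ∈ Ā_{m,n}`. -/
theorem zAlgebra_automorphism_inner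
    (k : Type) [Field k] [IsAlgClosed k] [CharZero k] (α : k)
    (γ : ℤ → ℤ → GWA k (X * (X + C α)) → GWA k (X * (X + C α)))
    (hbij : ∀ i j : ℤ, Set.BijOn (γ i j)
      (gwaComp k (X * (X + C α)) (j - i)) (gwaComp k (X * (X + C α)) (j - i)))
    (hadd : ∀ i j : ℤ, ∀ w ∈ gwaComp k (X * (X + C α)) (j - i),
      ∀ v ∈ gwaComp k (X * (X + C α)) (j - i), γ i j (w + v) = γ i j w + γ i j v)
    (hsmul : ∀ i j : ℤ, ∀ w ∈ gwaComp k (X * (X + C α)) (j - i), ∀ t : k,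
      γ i j (t • w) = t • γ i j w)
    (hmul : ∀ i j l : ℤ, ∀ w ∈ gwaComp k (X * (X + C α)) (j - i),
      ∀ v ∈ gwaComp k (X * (X + C α)) (l - j), γ i l (w * v) = γ i j w * γ j l v)
    (hone : ∀ i : ℤ, γ i i 1 = 1) :
    ∃ g h : ℤ → GWA k (X * (X + C α)),
      (∀ m : ℤ, g m ∈ gwaComp k (X * (X + C α)) 0) ∧
      (∀ n : ℤ, h n ∈ gwaComp k (X * (X + C α)) 0) ∧
      ∀ m n : ℤ, ∀ w ∈ gwaComp k (X * (X + C α)) (n - m),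
        γ m n w = g m * w * h n := by
  revert γ
  have hf : X * (X + C α) ≠ 0 := mul_ne_zero X_ne_zero (X_add_C_ne_zero α)
  generalize hfdef : X * (X + C α) = f at hf ⊢
  intro γ hbij hadd hsmul hmul hone
  have hmem0 (i : ℤ) (q : Polynomial k) : aeval (gwaZ k f) q ∈ gwaComp k f (i - i) := by
    rw [sub_self]; exact aeval_gwaZ_mem f q
  have hP (i : ℤ) : ∃ p : Polynomial k, γ i i (gwaZ k f) = aeval (gwaZ k f) p := by
    have h := (hbij i i).mapsTo (by simpa using hmem0 i X)
    rw [sub_self, SetLike.mem_coe, mem_gwaComp] at h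
    simpa [gwaMon_zero] using h
  choose P hP using hP
  have hγaeval (i : ℤ) (q : Polynomial k) :
      γ i i (aeval (gwaZ k f) q) = aeval (gwaZ k f) (q.comp (P i)) := by
    induction q using Polynomial.induction_on' with
    | add p q hp hq => rw [map_add, hadd i i _ (hmem0 i p) _ (hmem0 i q), hp, hq, add_comp, map_add]
    | monomial n a =>
      induction n with
      | zero =>
        have h := hsmul i i 1 (by simpa using hmem0 i 1) a
        rw [hone] at h
        simpa [Algebra.algebraMap_eq_smul_one] using h
      | succ n ih =>
        rw [← monomial_mul_X, map_mul, hmul i i i _ (hmem0 i _) _ (hmem0 i _), ih, aeval_X, hP,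
          mul_comp, map_mul, X_comp]
  have hlin (i : ℤ) : ∃ a b : k, a ≠ 0 ∧ P i = C a * X + C b := by
    obtain ⟨w, hw, hwz⟩ := (hbij i i).surjOn (by simpa using hmem0 i X)
    rw [sub_self, SetLike.mem_coe, mem_gwaComp] at hw
    obtain ⟨q, rfl⟩ := hw
    rw [gwaMon_zero, mul_one, hγaeval] at hwz
    exact exists_eq_linear_of_comp_eq_X (aeval_gwaZ_injective f hf (by simpa using hwz))
  have hγmul (i j : ℤ) (q : Polynomial k) : γ i j (aeval (gwaZ k f) q * gwaMon k f (j - i)) =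
      aeval (gwaZ k f) (q.comp (P i)) * γ i j (gwaMon k f (j - i)) := by
    rw [hmul i i j _ (hmem0 i q) _ (gwaMon_mem f _), hγaeval]
  have hc (i j : ℤ) : ∃ c : k, γ i j (gwaMon k f (j - i)) =
      aeval (gwaZ k f) (C c) * gwaMon k f (j - i) ∧ c ≠ 0 := by
    obtain ⟨u, hu⟩ := (mem_gwaComp f).1 ((hbij i j).mapsTo (gwaMon_mem f (j - i)))
    obtain ⟨w, hw, hwz⟩ := (hbij i j).surjOn (gwaMon_mem f (j - i))
    obtain ⟨q, rfl⟩ := (mem_gwaComp f).1 hw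
    rw [hγmul, hu, ← mul_assoc, ← map_mul] at hwz
    have h1 : q.comp (P i) * u = 1 :=
      aeval_mul_gwaMon_injective f hf (j - i) (by simpa using hwz)
    obtain ⟨c, hc, rfl⟩ := Polynomial.isUnit_iff.1 (IsUnit.of_mul_eq_one_right _ h1)
    exact ⟨c, hu, hc.ne_zero⟩
  choose c hc hc0 using hc
  have hX (i : ℤ) : γ i (i + 1) (gwaX k f) = aeval (gwaZ k f) (C (c i (i + 1))) * gwaX k f := by
    simpa [gwaMon_one] using hc i (i + 1)
  have hY (i : ℤ) : γ (i + 1) i (gwaY k f) = aeval (gwaZ k f) (C (c (i + 1) i)) * gwaY k f := by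
    simpa [gwaMon_neg_one] using hc (i + 1) i
  have hXmem (i : ℤ) : gwaX k f ∈ gwaComp k f (i + 1 - i) := by
    simpa [gwaMon_one] using gwaMon_mem f 1
  have hYmem (i : ℤ) : gwaY k f ∈ gwaComp k f (i - (i + 1)) := by
    simpa [gwaMon_neg_one] using gwaMon_mem f (-1)
  have hshift (i : ℤ) : (P (i + 1)).comp (X + 1) = P i + 1 := by
    have h1 := hmul i (i + 1) (i + 1) _ (hXmem i) _ (hmem0 (i + 1) X)
    have h2 := hmul i i (i + 1) _ (hmem0 i (X + 1)) _ (hXmem i)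
    rw [gwaX_mul_aeval, X_comp, h2, hX, hγaeval, hγaeval, X_comp, add_comp, X_comp, one_comp,
      mul_assoc (aeval _ (C _)), gwaX_mul_aeval, ← mul_assoc, ← mul_assoc, ← map_mul, ← map_mul,
      ← gwaMon_one] at h1
    have h3 := aeval_mul_gwaMon_injective f hf 1 h1
    rw [mul_comm] at h3
    exact (mul_left_cancel₀ (C_ne_zero.2 (hc0 i (i + 1))) h3).symm
  have hquad (i : ℤ) : f.comp (P i) = C (c i (i + 1) * c (i + 1) i) * f := by
    have h1 := hmul i (i + 1) i _ (hXmem i) _ (hYmem i)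
    rw [gwaX_mul_gwaY, hγaeval, hX, hY, mul_assoc, ← mul_assoc (gwaX k f), gwaX_mul_aeval,
      mul_assoc _ (gwaX k f), gwaX_mul_gwaY, ← map_mul, ← map_mul, C_comp, ← mul_assoc,
      ← C_mul] at h1
    exact aeval_gwaZ_injective f hf h1
  have hPX (i : ℤ) : P i = X := by
    obtain ⟨a, b, ha, hab⟩ := hlin i
    obtain ⟨a', b', ha', hab'⟩ := hlin (i + 1)
    have h1 := hshift i
    have h2 := hquad i
    have h3 := hquad (i + 1)
    rw [hab, hab'] at h1
    rw [hab, ← hfdef] at h2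
    rw [hab', ← hfdef] at h3
    obtain ⟨rfl, rfl⟩ := eq_X_of_shift_of_quadratic_comp ha ha' h1 h2 h3
    simpa using hab
  have hcs (i j : ℤ) : γ i j (gwaMon k f (j - i)) = c i j • gwaMon k f (j - i) := by
    rw [hc, aeval_C, Algebra.smul_def]
  have hcocycle (i j l : ℤ) : c i l = c i j * c j l := by
    obtain ⟨p, hp, h⟩ := gwaMon_mul_gwaMon f hf (j - i) (l - j)
    rw [show j - i + (l - j) = l - i by ring] at h
    have h1 := hmul i j l _ (gwaMon_mem f _) _ (gwaMon_mem f _)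
    rw [h, hγmul, hPX, comp_X, hcs, hcs, hcs, smul_mul_smul_comm, h, mul_smul_comm] at h1
    have h2 := aeval_mul_gwaMon_injective f hf (l - i) (a₁ := c i l • p) (a₂ := (c i j * c j l) • p)
      (by simpa using h1)
    exact smul_left_injective k hp h2
  refine ⟨fun m => aeval (gwaZ k f) (C (c m 0)), fun n => aeval (gwaZ k f) (C (c 0 n)),
    fun m => aeval_gwaZ_mem f _, fun n => aeval_gwaZ_mem f _, fun m n w hw => ?_⟩
  obtain ⟨q, rfl⟩ := (mem_gwaComp f).1 hw
  rw [hγmul, hPX, comp_X, hcs, hcocycle m 0 n]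
  beta_reduce
  rw [aeval_C, aeval_C, ← Algebra.commutes, ← Algebra.smul_def,
    ← Algebra.smul_def, smul_smul, mul_smul_comm, mul_comm (c 0 n)]

end
end

section
/- Let α ∈ ℕ^+ and let P be a graded right ideal of A(f), f = z(z+α). Then the following are equivalent: (i) P is projective; (ii) Ext¹_A(Z, P) = 0 where Z = A/(y^α, x, z)A is the finite-dimensional simple module; (iii) Hom_A(Z, A/P) = 0; (iv) A/P has projective dimension at most 1. -/
open Polynomial

noncomputable section

/-- `A(z(z+α))` for a positive integer `α`. -/
abbrev Acong (k : Type) [Field k] (α : ℕ+) : Type := GWA k (X * (X + C (α : k)))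

/-- The right ideal `(y^α, x, z)A` defining the finite-dimensional simple module `Z`. -/
abbrev Icong (k : Type) [Field k] (α : ℕ+) : Submodule (Acong k α)ᵐᵒᵖ (Acong k α) :=
  Submodule.span (Acong k α)ᵐᵒᵖ
    {gwaY k (X * (X + C (α : k))) ^ (α : ℕ), gwaX k (X * (X + C (α : k))),
      gwaZ k (X * (X + C (α : k)))}

/-! ### The action of the generalized Weyl algebra on sequences of polynomials -/

namespace GWA

variable {k : Type} [Field k] (f : Polynomial k)

/-- The shift `f(z + i)`. -/
def shift (i : ℤ) : k[X] := f.comp (X + C (i : k))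

/-- Right multiplication by `x` on sequences of left coefficients. -/
def opX : Module.End k[X] (ℤ → k[X]) where
  toFun h n := h (n - 1)
  map_add' _ _ := rfl
  map_smul' _ _ := rfl

/-- Right multiplication by `y` on sequences of left coefficients. -/
def opY : Module.End k[X] (ℤ → k[X]) where
  toFun h n := h (n + 1) * shift f n
  map_add' _ _ := by ext1; simp [add_mul]
  map_smul' _ _ := by ext1; simp [mul_assoc]

/-- Right multiplication by `z` on sequences of left coefficients. -/
def opZ : Module.End k[X] (ℤ → k[X]) where
  toFun h n := h n * (X + C (n : k))
  map_add' _ _ := by ext1; simp [add_mul]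
  map_smul' _ _ := by ext1; simp [mul_assoc]

lemma unop_aeval_opZ (q : k[X]) (h : ℤ → k[X]) (n : ℤ) :
    (aeval (MulOpposite.op (opZ (k := k))) q).unop h n = h n * q.comp (X + C (n : k)) := by
  induction q using Polynomial.induction_on' with
  | add p q hp hq => simp [hp, hq, mul_add]
  | monomial m a =>
    rw [aeval_monomial]
    have hpow : ∀ (m : ℕ) (g : ℤ → k[X]),
        ((opZ (k := k)) ^ m) g n = g n * (X + C (n : k)) ^ m := by
      intro m
      induction m with
      | zero => simp
      | succ m ih =>
        intro g
        rw [pow_succ, Module.End.mul_apply, ih]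
        simp [opZ, pow_succ', mul_assoc]
    simp only [MulOpposite.unop_mul, Module.End.mul_apply, MulOpposite.unop_pow,
      MulOpposite.unop_op, hpow, MulOpposite.algebraMap_apply, Module.algebraMap_end_apply,
      Pi.smul_apply, monomial_comp]
    rw [Polynomial.smul_eq_C_mul]
    ring

/-- The representation of `A(f)` by right multiplication on sequences of left coefficients. -/
def rep : GWA k f →ₐ[k] (Module.End k[X] (ℤ → k[X]))ᵐᵒᵖ :=
  RingQuot.liftAlgHom k ⟨FreeAlgebra.lift k
    ![MulOpposite.op opX, MulOpposite.op (opY f), MulOpposite.op opZ], by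
    rintro _ _ (_ | _ | _ | _) <;> apply MulOpposite.unop_injective <;>
      refine LinearMap.ext fun h => funext fun n => ?_
    · simp [opX, opZ, mul_add]; ring
    · simp [opY, opZ, mul_add, sub_eq_add_neg]; ring
    · rw [← Polynomial.aeval_algHom_apply]
      simp [unop_aeval_opZ, opX, opY, shift]
    · rw [← Polynomial.aeval_algHom_apply]
      simp [unop_aeval_opZ, opX, opY, shift, comp_assoc, sub_eq_add_neg, add_assoc]⟩

/-- The right action of `a` on a sequence of left coefficients. -/
def act (a : GWA k f) : Module.End k[X] (ℤ → k[X]) := (rep f a).unop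

lemma act_mul (a b : GWA k f) (h : ℤ → k[X]) : act f (a * b) h = act f b (act f a h) := by
  simp [act]

lemma act_X : act f (gwaX k f) = opX := by simp [act, rep, gwaX]

lemma act_Y : act f (gwaY k f) = opY f := by simp [act, rep, gwaY]

lemma act_Z : act f (gwaZ k f) = opZ := by simp [act, rep, gwaZ]

lemma act_aeval (q : k[X]) (h : ℤ → k[X]) (n : ℤ) :
    act f (aeval (gwaZ k f) q) h n = h n * q.comp (X + C (n : k)) := by
  rw [act, ← Polynomial.aeval_algHom_apply]
  have : rep f (gwaZ k f) = MulOpposite.op opZ := by simp [rep, gwaZ]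
  rw [this, unop_aeval_opZ]

lemma act_add (a b : GWA k f) : act f (a + b) = act f a + act f b := by simp [act]

lemma act_sum {ι : Type*} (s : Finset ι) (a : ι → GWA k f) :
    act f (∑ i ∈ s, a i) = ∑ i ∈ s, act f (a i) := by
  simp [act, map_sum, Finset.unop_sum]

/-- The product `∏_{j ≤ i < n} f(z + i)`. -/
def beta (n j : ℤ) : k[X] := ∏ i ∈ Finset.Ico j n, shift f i

lemma beta_of_le {n j : ℤ} (h : n ≤ j) : beta f n j = 1 := by
  simp [beta, Finset.Ico_eq_empty_of_le h]

lemma beta_succ {n j : ℤ} (h : j < n) : beta f n j = shift f j * beta f n (j + 1) := by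
  rw [beta, ← Finset.insert_Ico_add_one_left_eq_Ico h, Finset.prod_insert (by simp), beta]

lemma beta_mul {n m j : ℤ} (h : j ≤ m) (h' : m ≤ n) :
    beta f n j = beta f m j * beta f n m := by
  rw [beta, beta, beta, ← Finset.Ico_union_Ico_eq_Ico h h', Finset.prod_union]
  exact Finset.Ico_disjoint_Ico_consecutive _ _ _

lemma act_X_pow (m : ℕ) (h : ℤ → k[X]) (n : ℤ) :
    act f (gwaX k f ^ m) h n = h (n - m) := by
  induction m generalizing h n with
  | zero => simp [act]
  | succ m ih =>
    rw [pow_succ, act_mul, act_X]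
    simp only [opX, LinearMap.coe_mk, AddHom.coe_mk, ih]
    congr 1; push_cast; ring

lemma act_Y_pow (m : ℕ) (h : ℤ → k[X]) (n : ℤ) :
    act f (gwaY k f ^ m) h n = h (n + m) * beta f (n + m) n := by
  induction m generalizing h n with
  | zero => simp [act, beta]
  | succ m ih =>
    rw [pow_succ, act_mul, act_Y]
    simp only [opY, LinearMap.coe_mk, AddHom.coe_mk, ih]
    have e : n + ((m + 1 : ℕ) : ℤ) = n + 1 + m := by push_cast; ring
    rw [e, beta_succ f (by omega : n < n + 1 + m)]
    ring

lemma act_mon (i : ℤ) (h : ℤ → k[X]) (n : ℤ) :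
    act f (gwaMon k f i) h n = h (n - i) * beta f (n - i) n := by
  rw [gwaMon]
  split_ifs with hi
  · rw [act_X_pow, Int.toNat_of_nonneg hi, beta_of_le f (by omega), mul_one]
  · rw [act_Y_pow, Int.toNat_of_nonneg (by omega), sub_eq_add_neg]

/-! ### The normal form -/

/-- The element `∑ wₙ(z) mₙ`. -/
def ofCoeff (w : ℤ →₀ k[X]) : GWA k f := w.sum fun n q => aeval (gwaZ k f) q * gwaMon k f n

lemma X_mul_Z : gwaX k f * gwaZ k f = (gwaZ k f + 1) * gwaX k f := by
  simpa [gwaX, gwaZ] using RingQuot.mkAlgHom_rel k (gwaRel.xz (k := k) (f := f))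

lemma Y_mul_Z : gwaY k f * gwaZ k f = (gwaZ k f - 1) * gwaY k f := by
  simpa [gwaY, gwaZ] using RingQuot.mkAlgHom_rel k (gwaRel.yz (k := k) (f := f))

lemma X_mul_Y : gwaX k f * gwaY k f = aeval (gwaZ k f) f := by
  simpa [gwaX, gwaY, gwaZ, ← Polynomial.aeval_algHom_apply] using
    RingQuot.mkAlgHom_rel k (gwaRel.xy (k := k) (f := f))

lemma Y_mul_X : gwaY k f * gwaX k f = aeval (gwaZ k f) (f.comp (X - 1)) := by
  rw [gwaZ, Polynomial.aeval_algHom_apply]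
  simpa [gwaX, gwaY] using RingQuot.mkAlgHom_rel k (gwaRel.yx (k := k) (f := f))

lemma X_pow_mul_Z (m : ℕ) :
    gwaX k f ^ m * gwaZ k f = aeval (gwaZ k f) (X + C (m : k)) * gwaX k f ^ m := by
  induction m with
  | zero => simp
  | succ m ih =>
    rw [pow_succ, mul_assoc, X_mul_Z, add_mul, mul_add, ← mul_assoc, ih]
    simp [add_mul, mul_assoc, add_assoc]

lemma Y_pow_mul_Z (m : ℕ) :
    gwaY k f ^ m * gwaZ k f = aeval (gwaZ k f) (X - C (m : k)) * gwaY k f ^ m := by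
  induction m with
  | zero => simp
  | succ m ih =>
    rw [pow_succ, mul_assoc, Y_mul_Z, sub_mul, mul_sub, ← mul_assoc, ih]
    simp [sub_mul, add_mul, mul_assoc, sub_sub]

lemma mon_mul_Z (n : ℤ) :
    gwaMon k f n * gwaZ k f = aeval (gwaZ k f) (X + C (n : k)) * gwaMon k f n := by
  rw [gwaMon]
  split_ifs with hn
  · rw [X_pow_mul_Z]
    lift n to ℕ using hn
    simp
  · rw [Y_pow_mul_Z]
    obtain ⟨m, rfl⟩ : ∃ m : ℕ, n = -m := ⟨n.natAbs, by omega⟩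
    simp [sub_eq_add_neg]

lemma mon_mul_aeval (n : ℤ) (q : k[X]) :
    gwaMon k f n * aeval (gwaZ k f) q =
      aeval (gwaZ k f) (q.comp (X + C (n : k))) * gwaMon k f n := by
  induction q using Polynomial.induction_on with
  | C a => simpa using (Algebra.commutes a (gwaMon k f n)).symm
  | add p q hp hq => simp only [map_add, mul_add, hp, hq, add_comp, add_mul]
  | monomial m a ih =>
    rw [pow_succ, ← mul_assoc, map_mul, ← mul_assoc, ih, aeval_X, mul_assoc, mon_mul_Z,
      ← mul_assoc, ← map_mul]
    simp

lemma mon_of_nonneg {n : ℤ} (hn : 0 ≤ n) : gwaMon k f n = gwaX k f ^ n.toNat := by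
  simp [gwaMon, hn]

lemma mon_of_nonpos {n : ℤ} (hn : n ≤ 0) : gwaMon k f n = gwaY k f ^ (-n).toNat := by
  rcases hn.lt_or_eq with h | rfl
  · simp [gwaMon, h.not_ge]
  · simp [gwaMon]

lemma mon_mul_X (n : ℤ) :
    ∃ g : k[X], gwaMon k f n * gwaX k f = aeval (gwaZ k f) g * gwaMon k f (n + 1) := by
  rcases le_or_gt 0 n with hn | hn
  · refine ⟨1, ?_⟩
    rw [mon_of_nonneg f hn, mon_of_nonneg f (by omega : 0 ≤ n + 1), ← pow_succ,
      Int.toNat_add hn zero_le_one]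
    simp
  · refine ⟨(f.comp (X - 1)).comp (X + C ((n + 1 : ℤ) : k)), ?_⟩
    rw [← mon_mul_aeval, ← Y_mul_X, mon_of_nonpos f hn.le,
      mon_of_nonpos f (by omega : n + 1 ≤ 0), ← mul_assoc, ← pow_succ]
    congr 3; omega

lemma mon_mul_Y (n : ℤ) :
    ∃ g : k[X], gwaMon k f n * gwaY k f = aeval (gwaZ k f) g * gwaMon k f (n - 1) := by
  rcases le_or_gt n 0 with hn | hn
  · refine ⟨1, ?_⟩
    rw [mon_of_nonpos f hn, mon_of_nonpos f (by omega : n - 1 ≤ 0), ← pow_succ, map_one, one_mul]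
    congr 1; omega
  · refine ⟨f.comp (X + C ((n - 1 : ℤ) : k)), ?_⟩
    rw [← mon_mul_aeval, ← X_mul_Y, mon_of_nonneg f hn.le,
      mon_of_nonneg f (by omega : 0 ≤ n - 1), ← mul_assoc, ← pow_succ]
    congr 3; omega

/-- A subspace closed under right multiplication by the generators is closed under right
multiplication. -/
lemma mul_mem_of_generators (S : Submodule k (GWA k f))
    (hX : ∀ a ∈ S, a * gwaX k f ∈ S) (hY : ∀ a ∈ S, a * gwaY k f ∈ S)
    (hZ : ∀ a ∈ S, a * gwaZ k f ∈ S) (b : GWA k f) : ∀ a ∈ S, a * b ∈ S := by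
  obtain ⟨b, rfl⟩ := RingQuot.mkAlgHom_surjective k (gwaRel k f) b
  induction b using FreeAlgebra.induction with
  | grade0 r =>
    intro a ha
    rw [AlgHom.commutes, ← Algebra.commutes, ← Algebra.smul_def]
    exact S.smul_mem _ ha
  | grade1 i => fin_cases i <;> assumption
  | mul b c hb hc =>
    intro a ha
    rw [map_mul, ← mul_assoc]
    exact hc _ (hb a ha)
  | add b c hb hc =>
    intro a ha
    rw [map_add, mul_add]
    exact S.add_mem (hb a ha) (hc a ha)

lemma ofCoeff_single (n : ℤ) (q : k[X]) :
    ofCoeff f (Finsupp.single n q) = aeval (gwaZ k f) q * gwaMon k f n := by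
  simp [ofCoeff]

lemma span_monomials_eq_top :
    Submodule.span k {a : GWA k f | ∃ (n : ℤ) (q : k[X]),
      a = aeval (gwaZ k f) q * gwaMon k f n} = ⊤ := by
  set S := Submodule.span k {a : GWA k f | ∃ (n : ℤ) (q : k[X]),
    a = aeval (gwaZ k f) q * gwaMon k f n} with hS
  have key : ∀ g : GWA k f, (∀ n, ∃ (q : k[X]) (n' : ℤ),
      gwaMon k f n * g = aeval (gwaZ k f) q * gwaMon k f n') → ∀ a ∈ S, a * g ∈ S := by
    intro g hg a ha
    induction ha using Submodule.span_induction with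
    | mem a ha =>
      obtain ⟨n, q, rfl⟩ := ha
      obtain ⟨q', n', h⟩ := hg n
      rw [mul_assoc, h, ← mul_assoc, ← map_mul]
      exact Submodule.subset_span ⟨_, _, rfl⟩
    | zero => simp
    | add a b _ _ ha hb => rw [add_mul]; exact S.add_mem ha hb
    | smul r a _ ha => rw [smul_mul_assoc]; exact S.smul_mem r ha
  have h1 : (1 : GWA k f) ∈ S := Submodule.subset_span ⟨0, 1, by simp [gwaMon]⟩
  refine Submodule.eq_top_iff'.2 fun b => ?_
  rw [← one_mul b]
  refine mul_mem_of_generators f S (key _ fun n => ?_) (key _ fun n => ?_) (key _ fun n => ?_)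
    b 1 h1
  · obtain ⟨g, h⟩ := mon_mul_X f n
    exact ⟨g, _, h⟩
  · obtain ⟨g, h⟩ := mon_mul_Y f n
    exact ⟨g, _, h⟩
  · exact ⟨_, n, mon_mul_Z f n⟩

lemma ofCoeff_add (v w : ℤ →₀ k[X]) : ofCoeff f (v + w) = ofCoeff f v + ofCoeff f w :=
  Finsupp.sum_add_index' (by simp) (by simp [add_mul])

lemma ofCoeff_surjective : Function.Surjective (ofCoeff f) := by
  intro a
  have ha : a ∈ Submodule.span k {a : GWA k f | ∃ (n : ℤ) (q : k[X]),
      a = aeval (gwaZ k f) q * gwaMon k f n} := by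
    rw [span_monomials_eq_top]; trivial
  induction ha using Submodule.span_induction with
  | mem a ha =>
    obtain ⟨n, q, rfl⟩ := ha
    exact ⟨_, ofCoeff_single f n q⟩
  | zero => exact ⟨0, by simp [ofCoeff]⟩
  | add a b _ _ ha hb =>
    obtain ⟨v, rfl⟩ := ha
    obtain ⟨w, rfl⟩ := hb
    exact ⟨v + w, ofCoeff_add f v w⟩
  | smul r a _ ha =>
    obtain ⟨v, rfl⟩ := ha
    refine ⟨v.mapRange (fun p => C r * p) (by simp), ?_⟩
    rw [ofCoeff, Finsupp.sum_mapRange_index (by simp), ofCoeff, Finsupp.smul_sum]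
    simp [Algebra.smul_def, mul_assoc]

lemma act_ofCoeff_single (w : ℤ →₀ k[X]) (n : ℤ) (h : k[X]) (j : ℤ) :
    act f (ofCoeff f w) (Pi.single n h) j =
      h * (w (j - n)).comp (X + C (n : k)) * beta f n j := by
  rw [ofCoeff, Finsupp.sum, act_sum, LinearMap.sum_apply, Finset.sum_apply]
  simp only [act_mul, act_mon, act_aeval]
  rw [Finset.sum_eq_single (j - n)]
  · simp
  · intro i _ hi
    rw [Pi.single_eq_of_ne (by omega : j - i ≠ n)]
    simp
  · intro hj
    simp [Finsupp.notMem_support_iff.1 hj]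

/-- The sequence of left coefficients of an element of `A(f)`. -/
def coeff (a : GWA k f) : ℤ → k[X] := act f a (Pi.single 0 1)

lemma coeff_ofCoeff (w : ℤ →₀ k[X]) (j : ℤ) :
    coeff f (ofCoeff f w) j = w j * beta f 0 j := by
  simp [coeff, act_ofCoeff_single]

lemma coeff_mul (a b : GWA k f) : coeff f (a * b) = act f b (coeff f a) := act_mul f a b _

lemma coeff_add (a b : GWA k f) : coeff f (a + b) = coeff f a + coeff f b := by
  simp [coeff, act_add]

lemma coeff_aeval_mul (q : k[X]) (a : GWA k f) :
    coeff f (aeval (gwaZ k f) q * a) = q • coeff f a := by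
  rw [coeff_mul, coeff, coeff, ← map_smul]
  congr 1
  ext1 n
  rw [act_aeval]
  rcases eq_or_ne n 0 with rfl | hn
  · simp
  · simp [Pi.single_eq_of_ne hn]

lemma beta_dvd_coeff (a : GWA k f) (n : ℤ) : beta f 0 n ∣ coeff f a n := by
  obtain ⟨w, rfl⟩ := ofCoeff_surjective f a
  rw [coeff_ofCoeff]
  exact dvd_mul_left _ _

lemma coeff_mul_Z (a : GWA k f) (n : ℤ) :
    coeff f (a * gwaZ k f) n = coeff f a n * (X + C (n : k)) := by
  rw [coeff_mul, act_Z]; rfl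

lemma coeff_mul_aeval (a : GWA k f) (q : k[X]) (n : ℤ) :
    coeff f (a * aeval (gwaZ k f) q) n = coeff f a n * q.comp (X + C (n : k)) := by
  rw [coeff_mul, act_aeval]

lemma coeff_mul_X (a : GWA k f) (n : ℤ) : coeff f (a * gwaX k f) n = coeff f a (n - 1) := by
  rw [coeff_mul, act_X]; rfl

lemma coeff_mul_Y (a : GWA k f) (n : ℤ) :
    coeff f (a * gwaY k f) n = coeff f a (n + 1) * shift f n := by
  rw [coeff_mul, act_Y]; rfl

lemma coeff_mul_Y_pow (a : GWA k f) (m : ℕ) (n : ℤ) :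
    coeff f (a * gwaY k f ^ m) n = coeff f a (n + m) * beta f (n + m) n := by
  rw [coeff_mul, act_Y_pow]

lemma coeff_ofCoeff_single (n : ℤ) (q : k[X]) :
    coeff f (aeval (gwaZ k f) q * gwaMon k f n) = Pi.single n (q * beta f 0 n) := by
  rw [← ofCoeff_single]
  ext1 j
  rw [coeff_ofCoeff]
  rcases eq_or_ne j n with rfl | hj
  · simp
  · simp [Pi.single_eq_of_ne hj, Finsupp.single_eq_of_ne hj]

lemma shift_ne_zero (hf : f ≠ 0) (i : ℤ) : shift f i ≠ 0 := by
  rw [shift, Ne, comp_X_add_C_eq_zero_iff]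
  exact hf

lemma beta_ne_zero (hf : f ≠ 0) (n j : ℤ) : beta f n j ≠ 0 :=
  Finset.prod_ne_zero_iff.2 fun i _ => shift_ne_zero f hf i

lemma coeff_injective (hf : f ≠ 0) : Function.Injective (coeff f) := by
  intro a b hab
  obtain ⟨v, rfl⟩ := ofCoeff_surjective f a
  obtain ⟨w, rfl⟩ := ofCoeff_surjective f b
  congr 1
  ext1 n
  have := congrFun hab n
  rw [coeff_ofCoeff, coeff_ofCoeff] at this
  exact mul_right_cancel₀ (beta_ne_zero f hf 0 n) this

/-- Left multiplication by a nonzero homogeneous element is injective. -/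
lemma mul_left_injective_of_coeff_single (hf : f ≠ 0) {u : GWA k f} {n : ℤ} {h : k[X]}
    (hh : h ≠ 0) (hu : coeff f u = Pi.single n h) {b : GWA k f} (hb : u * b = 0) : b = 0 := by
  obtain ⟨w, rfl⟩ := ofCoeff_surjective f b
  have hw : w = 0 := by
    ext1 i
    have := congrFun (congrArg (coeff f) hb) (n + i)
    rw [coeff_mul, hu, act_ofCoeff_single] at this
    rw [add_sub_cancel_left] at this
    have h0 := this.trans (show coeff f 0 (n + i) = 0 by simp [coeff, act])
    simpa only [mul_eq_zero, hh, beta_ne_zero f hf, comp_X_add_C_eq_zero_iff, false_or,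
      or_false, Finsupp.coe_zero, Pi.zero_apply] using h0
  rw [hw]
  simp [ofCoeff]

/-- The image of the coefficient map consists of the finitely supported sequences whose entries
are divisible by the coefficients of the canonical monomials. -/
lemma exists_coeff_eq {g : ℤ → k[X]} (hfin : g.support.Finite) (hg : ∀ n, beta f 0 n ∣ g n)
    (hf : f ≠ 0) : ∃ a, coeff f a = g := by
  choose w hw using hg
  have hws : w.support ⊆ hfin.toFinset := by
    intro n hn
    rw [Set.Finite.coe_toFinset, Function.mem_support, hw n]
    exact mul_ne_zero (beta_ne_zero f hf 0 n) hn
  refine ⟨ofCoeff f (Finsupp.ofSupportFinite w (hfin.toFinset.finite_toSet.subset hws)), ?_⟩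
  ext1 n
  rw [coeff_ofCoeff, hw n, mul_comm]
  rfl

lemma coeff_support_finite (a : GWA k f) : (coeff f a).support.Finite := by
  obtain ⟨w, rfl⟩ := ofCoeff_surjective f a
  refine w.support.finite_toSet.subset fun n hn => ?_
  rw [Function.mem_support, coeff_ofCoeff] at hn
  simpa using left_ne_zero_of_mul hn

end GWA
/-! ### Extensions of a cyclic module by a right ideal -/

namespace RightIdeal

open MulOpposite

variable {A : Type} [Ring A]

/-- Left multiplication by `c` as an endomorphism of the right regular module. -/
def mulLeft (c : A) : A →ₗ[Aᵐᵒᵖ] A where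
  toFun a := c * a
  map_add' := mul_add c
  map_smul' r a := (mul_assoc c a r.unop).symm

lemma mulLeft_apply (c a : A) : mulLeft c a = c * a := rfl

variable {I P : Submodule Aᵐᵒᵖ A}

/-- An extension of `A / I` by `M` splits as soon as every homomorphism `I → M` extends
to `A`. -/
lemma exists_section {M : Type*} [AddCommGroup M] [Module Aᵐᵒᵖ M]
    (hM : ∀ ψ : I →ₗ[Aᵐᵒᵖ] M, ∃ c : M, ∀ a : I, ψ a = op (a : A) • c)
    {E : Type*} [AddCommGroup E] [Module Aᵐᵒᵖ E] (ι : M →ₗ[Aᵐᵒᵖ] E) (π : E →ₗ[Aᵐᵒᵖ] (A ⧸ I))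
    (hι : Function.Injective ι) (hπ : Function.Surjective π)
    (hex : LinearMap.range ι = LinearMap.ker π) :
    ∃ s : (A ⧸ I) →ₗ[Aᵐᵒᵖ] E, π.comp s = LinearMap.id := by
  obtain ⟨e, he⟩ := hπ (I.mkQ 1)
  have hmk : ∀ a : A, op a • I.mkQ 1 = I.mkQ a := fun a => by
    rw [← map_smul, op_smul_eq_mul, one_mul]
  have hmem : ∀ a : I, op (a : A) • e ∈ LinearMap.range ι := by
    intro a
    rw [hex, LinearMap.mem_ker, map_smul, he, hmk]
    simp
  let orbit : A →ₗ[Aᵐᵒᵖ] E :=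
    { toFun := fun a => op a • e
      map_add' := fun a b => by rw [op_add, add_smul]
      map_smul' := fun r a => by
        rw [RingHom.id_apply, smul_smul]
        rfl }
  let ψ : I →ₗ[Aᵐᵒᵖ] M := (LinearEquiv.ofInjective ι hι).symm.toLinearMap.comp
    ((orbit.comp I.subtype).codRestrict (LinearMap.range ι) hmem)
  have hψ : ∀ a : I, ι (ψ a) = op (a : A) • e := fun a =>
    congrArg Subtype.val ((LinearEquiv.ofInjective ι hι).apply_symm_apply ⟨_, hmem a⟩)
  obtain ⟨c, hc⟩ := hM ψ
  let lift : A →ₗ[Aᵐᵒᵖ] E :=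
    { toFun := fun a => op a • (e - ι c)
      map_add' := fun a b => by rw [op_add, add_smul]
      map_smul' := fun r a => by
        rw [RingHom.id_apply, smul_smul]
        rfl }
  refine ⟨I.liftQ lift fun a ha => ?_, ?_⟩
  · change op a • (e - ι c) = 0
    rw [smul_sub, ← map_smul, ← hc ⟨a, ha⟩, hψ, sub_self]
  · refine Submodule.linearMap_qext _ (LinearMap.ext fun a => ?_)
    change π (op a • (e - ι c)) = I.mkQ a
    have hc0 : π (ι c) = 0 := by
      rw [← LinearMap.mem_ker, ← hex]
      exact ⟨c, rfl⟩
    rw [map_smul, map_sub, he, hc0, sub_zero, hmk]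

/-- Homomorphisms from `I` to a projective module extend to `A` if those to `A` do. -/
lemma exists_extension_of_projective
    (hI : ∀ ψ : I →ₗ[Aᵐᵒᵖ] A, ∃ c : A, ∀ a : I, ψ a = c * a)
    (hreg : ∃ z ∈ I, ∀ c : A, c * z = 0 → c = 0)
    {M : Type*} [AddCommGroup M] [Module Aᵐᵒᵖ M] [Module.Projective Aᵐᵒᵖ M]
    (ψ : I →ₗ[Aᵐᵒᵖ] M) : ∃ c : M, ∀ a : I, ψ a = op (a : A) • c := by
  obtain ⟨z, hz, hzreg⟩ := hreg
  obtain ⟨s, hs⟩ := Module.projective_def'.1 ‹Module.Projective Aᵐᵒᵖ M›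
  let unopL : Aᵐᵒᵖ →ₗ[Aᵐᵒᵖ] A :=
    { toFun := unop, map_add' := fun _ _ => rfl, map_smul' := fun _ _ => rfl }
  choose c hc using fun m : M => hI
    (unopL.comp ((Finsupp.lapply m).comp (s.comp ψ)))
  have hc' : ∀ m (a : I), s (ψ a) m = op (c m * a) := fun m a =>
    unop_injective (hc m a)
  let C : M →₀ Aᵐᵒᵖ := Finsupp.ofSupportFinite (fun m => op (c m)) <| by
    refine (s (ψ ⟨z, hz⟩)).support.finite_toSet.subset fun m hm => ?_
    rw [Finset.mem_coe, Finsupp.mem_support_iff, hc']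
    intro h0
    exact hm (by simp [hzreg (c m) (op_injective h0)])
  refine ⟨Finsupp.linearCombination Aᵐᵒᵖ id C, fun a => ?_⟩
  have hsa : s (ψ a) = op (a : A) • C := by
    ext1 m
    rw [hc', op_mul]
    rfl
  calc ψ a = Finsupp.linearCombination Aᵐᵒᵖ id (s (ψ a)) := (LinearMap.congr_fun hs (ψ a)).symm
    _ = _ := by rw [hsa, map_smul]

/-- If every extension of `A / I` by `P` splits then `Hom(A/I, A/P) = 0`. -/
lemma hom_eq_zero_of_extensions_split (hreg : ∃ z ∈ I, ∀ c : A, c * z = 0 → c = 0)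
    (hsplit : ∀ (E : Type) (_ : AddCommGroup E) (_ : Module Aᵐᵒᵖ E)
      (ι : P →ₗ[Aᵐᵒᵖ] E) (π : E →ₗ[Aᵐᵒᵖ] (A ⧸ I)),
      Function.Injective ι → Function.Surjective π → LinearMap.range ι = LinearMap.ker π →
      ∃ s : (A ⧸ I) →ₗ[Aᵐᵒᵖ] E, π.comp s = LinearMap.id)
    (φ : (A ⧸ I) →ₗ[Aᵐᵒᵖ] (A ⧸ P)) : φ = 0 := by
  obtain ⟨z, hz, hzreg⟩ := hreg
  let E : Submodule Aᵐᵒᵖ (A × (A ⧸ I)) :=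
    LinearMap.ker (P.mkQ.comp (LinearMap.fst _ _ _) - φ.comp (LinearMap.snd _ _ _))
  have hE : ∀ e : A × (A ⧸ I), e ∈ E ↔ P.mkQ e.1 = φ e.2 := fun e => by
    rw [LinearMap.mem_ker, LinearMap.sub_apply, sub_eq_zero]
    rfl
  let ι : P →ₗ[Aᵐᵒᵖ] E := ((LinearMap.inl Aᵐᵒᵖ A (A ⧸ I)).comp P.subtype).codRestrict E
    fun p => (hE _).2 (by simp)
  let π : E →ₗ[Aᵐᵒᵖ] (A ⧸ I) := (LinearMap.snd Aᵐᵒᵖ A (A ⧸ I)).comp E.subtype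
  obtain ⟨s, hs⟩ := hsplit E inferInstance inferInstance ι π
    (fun p q h => Subtype.ext (congrArg (fun e : E => e.1.1) h))
    (fun b => by
      obtain ⟨a, ha⟩ := P.mkQ_surjective (φ b)
      exact ⟨⟨(a, b), (hE _).2 ha⟩, rfl⟩)
    (by
      ext ⟨⟨a, b⟩, he⟩
      constructor
      · rintro ⟨p, hp⟩
        rw [← hp]
        rfl
      · intro h
        have hb : b = 0 := h
        subst hb
        have ha : a ∈ P := by simpa using (hE _).1 he
        exact ⟨⟨a, ha⟩, rfl⟩)
  have hs1 : ∀ b, (s b).1.1 = 0 := by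
    let t : (A ⧸ I) →ₗ[Aᵐᵒᵖ] A := (LinearMap.fst Aᵐᵒᵖ A (A ⧸ I)).comp (E.subtype.comp s)
    have ht1 : t (I.mkQ 1) = 0 := by
      refine hzreg _ ?_
      have h : op z • t (I.mkQ 1) = t (I.mkQ z) := by
        rw [← map_smul, ← map_smul, op_smul_eq_mul, one_mul]
      have hz0 : I.mkQ z = 0 := by simpa using hz
      rw [← op_smul_eq_mul, h, hz0, map_zero]
    intro b
    obtain ⟨a, rfl⟩ := I.mkQ_surjective b
    change t (I.mkQ a) = 0
    have h : I.mkQ a = op a • I.mkQ 1 := by rw [← map_smul, op_smul_eq_mul, one_mul]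
    rw [h, map_smul, ht1, smul_zero]
  refine LinearMap.ext fun b => ?_
  have h1 := (hE _).1 (s b).2
  have h2 : (s b).1.2 = b := LinearMap.congr_fun hs b
  rw [hs1, map_zero, h2] at h1
  rw [← h1, LinearMap.zero_apply]

/-- `A / P` has projective dimension at most one if and only if `P` is projective. -/
lemma projective_iff_exists_resolution :
    Module.Projective Aᵐᵒᵖ P ↔
      ∃ (Q : Type) (_ : AddCommGroup Q) (_ : Module Aᵐᵒᵖ Q) (g : Q →ₗ[Aᵐᵒᵖ] (A ⧸ P)),
        Module.Projective Aᵐᵒᵖ Q ∧ Function.Surjective g ∧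
        Module.Projective Aᵐᵒᵖ (LinearMap.ker g) := by
  let e : A ≃ₗ[Aᵐᵒᵖ] Aᵐᵒᵖ :=
    { toFun := op, invFun := unop, map_add' := fun _ _ => rfl, map_smul' := fun _ _ => rfl,
      left_inv := fun _ => rfl, right_inv := fun _ => rfl }
  have hA : Module.Projective Aᵐᵒᵖ A := Module.Projective.of_equiv e.symm
  constructor
  · intro hP
    refine ⟨A, inferInstance, inferInstance, P.mkQ, hA, P.mkQ_surjective, ?_⟩
    rw [Submodule.ker_mkQ]
    exact hP
  · rintro ⟨Q, _, _, g, hQ, hg, hK⟩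
    obtain ⟨a, ha⟩ := Module.projective_lifting_property g P.mkQ hg
    obtain ⟨b, hb⟩ := Module.projective_lifting_property P.mkQ g P.mkQ_surjective
    have ha' : ∀ x, g (a x) = P.mkQ x := LinearMap.congr_fun ha
    have hb' : ∀ y, P.mkQ (b y) = g y := LinearMap.congr_fun hb
    have hsub : ∀ x, x - b (a x) ∈ P := fun x => by
      rw [← Submodule.Quotient.mk_eq_zero, ← Submodule.mkQ_apply, map_sub, hb', ha', sub_self]
    have hbK : ∀ y : LinearMap.ker g, b y ∈ P := fun y => by
      rw [← Submodule.Quotient.mk_eq_zero, ← Submodule.mkQ_apply, hb', y.2]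
    have haP : ∀ p : P, a p ∈ LinearMap.ker g := fun p => by
      rw [LinearMap.mem_ker, ha']
      simp
    refine Module.Projective.of_split (M := LinearMap.ker g × A)
      (((a.comp P.subtype).codRestrict _ haP).prod P.subtype)
      (((b.comp (Submodule.subtype _)).codRestrict P hbK).coprod
        ((LinearMap.id - b.comp a).codRestrict P hsub)) ?_
    ext p
    change b (a p) + ((p : A) - b (a p)) = p
    abel

/-- A module is projective if the scalars that factor through a projective module are not
contained in any maximal ideal of a commutative ring acting by endomorphisms. -/
lemma projective_of_factor_locally {R M S : Type} [Ring R] [AddCommGroup M] [Module R M]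
    [CommRing S] (L : S →+* Module.End R M)
    (h : ∀ m : Ideal S, m.IsMaximal → ∃ s ∉ m, ∃ (i : M →ₗ[R] R) (r : R →ₗ[R] M),
      r.comp i = L s) : Module.Projective R M := by
  let J : Ideal S :=
    { carrier := {s | ∃ (F : Type) (_ : AddCommGroup F) (_ : Module R F)
        (i : M →ₗ[R] F) (r : F →ₗ[R] M), Module.Projective R F ∧ r.comp i = L s}
      zero_mem' := ⟨R, inferInstance, inferInstance, 0, 0, inferInstance, by simp⟩
      add_mem' := by
        rintro s t ⟨F, _, _, i, r, _, hs⟩ ⟨G, _, _, j, q, _, ht⟩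
        refine ⟨F × G, inferInstance, inferInstance, i.prod j, r.coprod q, inferInstance, ?_⟩
        rw [LinearMap.coprod_comp_prod, hs, ht, map_add]
      smul_mem' := by
        rintro c s ⟨F, _, _, i, r, hF, hs⟩
        refine ⟨F, inferInstance, inferInstance, i, (L c).comp r, hF, ?_⟩
        rw [LinearMap.comp_assoc, hs, smul_eq_mul, map_mul]
        rfl }
  have hJ : J = ⊤ := by
    by_contra hne
    obtain ⟨m, hm, hle⟩ := Ideal.exists_le_maximal J hne
    obtain ⟨s, hs, i, r, hir⟩ := h m hm
    exact hs (hle ⟨R, inferInstance, inferInstance, i, r, inferInstance, hir⟩)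
  obtain ⟨F, _, _, i, r, hF, hir⟩ := (Ideal.eq_top_iff_one J).1 hJ
  exact Module.Projective.of_split i r (by rw [hir, map_one]; rfl)

end RightIdeal
/-! ### Divisor chains -/

namespace GWA

section Chains

variable {k : Type} [Field k]

/-- In a divisor chain whose successive quotients do not vanish at `l`, the first term divides
every other term up to a single polynomial that does not vanish at `l`. -/
lemma exists_dvd_mul_of_chain (q d : ℕ → k[X]) (hq : ∀ n, q n ≠ 0)
    (hd : ∀ n, q n = q (n + 1) * d n) {l : k} (hl : ∀ n, (d n).eval l ≠ 0) :
    ∃ s : k[X], s.eval l ≠ 0 ∧ ∀ j, q 0 ∣ s * q j := by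
  have hdvd : ∀ {m n}, m ≤ n → q n ∣ q m := by
    intro m n hmn
    induction n, hmn using Nat.le_induction with
    | base => exact dvd_rfl
    | succ n _ ih => exact (Dvd.intro _ (hd n).symm).trans ih
  have hprod : ∀ n, ∃ s : k[X], s.eval l ≠ 0 ∧ q 0 = s * q n := by
    intro n
    induction n with
    | zero => exact ⟨1, by simp, by simp⟩
    | succ n ih =>
      obtain ⟨s, hs, h⟩ := ih
      refine ⟨s * d n, by simp [hs, hl], ?_⟩
      rw [h, hd n]
      ring
  let N := Function.argmin (fun n => (q n).natDegree)
  have hN : ∀ j, (q N).natDegree ≤ (q j).natDegree := fun j =>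
    Function.argmin_le (fun n => (q n).natDegree) j
  obtain ⟨s, hs, h⟩ := hprod N
  refine ⟨s, hs, fun j => ?_⟩
  rw [h]
  refine mul_dvd_mul_left s ?_
  rcases le_total j N with hj | hj
  · exact hdvd hj
  · exact (associated_of_dvd_of_natDegree_le (hdvd hj) (hq N) (hN j)).symm.dvd

variable (f : k[X])

lemma beta_dvd_beta_mul (n j : ℤ) : beta f n j ∣ beta f n 0 * beta f 0 j := by
  rcases le_total n j with h | h
  · rw [beta_of_le f h]; exact one_dvd _
  rcases le_total j 0 with h0 | h0
  · rcases le_total n 0 with hn | hn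
    · rw [beta_mul f h hn]
      exact (dvd_mul_right _ _).mul_left _
    · rw [beta_mul f h0 hn, mul_comm]
  · rw [beta_mul f h0 h]
    exact (dvd_mul_left _ _).mul_right _

lemma exists_mul_beta_dvd (hf : f ≠ 0) (q d d' : ℤ → k[X]) (hq : ∀ n, q n ≠ 0)
    (hd : ∀ n, q n = q (n + 1) * d n) (hd' : ∀ n, shift f n = d n * d' n)
    (hb : ∀ n, beta f 0 n ∣ q n) {l : k} {n : ℤ}
    (hl : ∀ i, n ≤ i → (d i).eval l ≠ 0) (hl' : ∀ i, i < n → (d' i).eval l ≠ 0) :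
    ∃ s : k[X], s.eval l ≠ 0 ∧ ∀ j, q n * beta f n j ∣ s * q j := by
  obtain ⟨s, hs, hsd⟩ := exists_dvd_mul_of_chain (fun i => q (n + i)) (fun i => d (n + i))
    (fun _ => hq _) (fun i => by simpa [add_assoc] using hd (n + i)) (l := l)
    (fun i => hl _ (by omega))
  have hg : beta f n 0 ≠ 0 := beta_ne_zero f hf n 0
  have hr : ∀ j, ∃ r, beta f n 0 * q j = beta f n j * r := fun j =>
    (beta_dvd_beta_mul f n j).trans (mul_dvd_mul_left _ (hb j))
  choose r hr using hr
  have hr0 : ∀ j, r j ≠ 0 := fun j h0 => by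
    have := hr j
    rw [h0, mul_zero] at this
    exact mul_ne_zero hg (hq j) this
  obtain ⟨t, ht, htd⟩ := exists_dvd_mul_of_chain (fun i => r (n - i)) (fun i => d' (n - i - 1))
    (fun _ => hr0 _) (fun i => by
      have hlt : n - i - 1 < n := by omega
      have h1 := hr (n - i - 1)
      have h2 := hr (n - i)
      rw [beta_succ f hlt, hd, sub_add_cancel, hd'] at h1
      have hdi : d (n - i - 1) ≠ 0 := fun h0 => shift_ne_zero f hf (n - i - 1) (by
        rw [hd', h0, zero_mul])
      have e : n - ((i + 1 : ℕ) : ℤ) = n - i - 1 := by push_cast; ring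
      rw [e]
      refine mul_left_cancel₀ (mul_ne_zero (beta_ne_zero f hf n (n - i)) hdi) ?_
      linear_combination h1 - d (n - i - 1) * h2) (l := l)
    (fun i => hl' _ (by omega))
  refine ⟨s * t, by simp [hs, ht], fun j => ?_⟩
  rcases le_total n j with hj | hj
  · obtain ⟨i, rfl⟩ := Int.le.dest hj
    rw [beta_of_le f hj, mul_one, mul_right_comm]
    exact Dvd.dvd.mul_right (by simpa using hsd i) t
  · obtain ⟨i, hi⟩ := Int.le.dest hj
    obtain rfl : j = n - i := by omega
    have h := mul_dvd_mul_left (beta f n (n - i)) (htd i)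
    simp only [Nat.cast_zero, sub_zero] at h
    have hn := hr n
    rw [beta_of_le f le_rfl, one_mul] at hn
    rw [← hn, mul_left_comm _ t, ← hr, mul_left_comm, mul_left_comm t,
      mul_dvd_mul_iff_left hg] at h
    rw [mul_assoc, mul_comm (q n)]
    exact h.mul_left s

end Chains

end GWA
/-! ### Graded right ideals -/

namespace GWA

open MulOpposite RightIdeal

variable {k : Type} [Field k] (f : k[X])

lemma exists_of_mem_comp {n : ℤ} {m : GWA k f} (hm : m ∈ gwaComp k f n) :
    ∃ q : k[X], m = aeval (gwaZ k f) q * gwaMon k f n := by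
  induction hm using Submodule.span_induction with
  | mem m hm => exact hm
  | zero => exact ⟨0, by simp⟩
  | add a b _ _ ha hb =>
    obtain ⟨p, rfl⟩ := ha
    obtain ⟨q, rfl⟩ := hb
    exact ⟨p + q, by rw [map_add, add_mul]⟩
  | smul r a _ ha =>
    obtain ⟨p, rfl⟩ := ha
    exact ⟨r • p, by rw [map_smul, smul_mul_assoc]⟩

variable {f} {P : Submodule (GWA k f)ᵐᵒᵖ (GWA k f)}

lemma mul_mem_right {p : GWA k f} (hp : p ∈ P) (b : GWA k f) : p * b ∈ P :=
  P.smul_mem (op b) hp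

lemma aeval_mul_mem (hgr : P = Submodule.span (GWA k f)ᵐᵒᵖ
      {m | m ∈ P ∧ ∃ n : ℤ, m ∈ gwaComp k f n}) (s : k[X]) {p : GWA k f} (hp : p ∈ P) :
    aeval (gwaZ k f) s * p ∈ P := by
  rw [hgr] at hp
  induction hp using Submodule.span_induction with
  | mem m hm =>
    obtain ⟨hmP, n, hmn⟩ := hm
    obtain ⟨q, rfl⟩ := exists_of_mem_comp f hmn
    have h : aeval (gwaZ k f) s * (aeval (gwaZ k f) q * gwaMon k f n) =
        aeval (gwaZ k f) q * gwaMon k f n * aeval (gwaZ k f) (s.comp (X - C (n : k))) := by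
      rw [mul_assoc _ (gwaMon k f n), mon_mul_aeval, comp_assoc, ← mul_assoc, ← mul_assoc,
        ← map_mul, ← map_mul, mul_comm s]
      congr 4
      simp
    rw [h]
    exact mul_mem_right hmP _
  | zero => simp
  | add a b _ _ ha hb => rw [mul_add]; exact P.add_mem ha hb
  | smul r a _ ha =>
    rw [mul_smul_comm]
    exact P.smul_mem r ha

/-- The elements all of whose homogeneous components lie in `P`. -/
def componentsIn (P : Submodule (GWA k f)ᵐᵒᵖ (GWA k f)) : Submodule k (GWA k f) where
  carrier := {a | ∀ n, ∃ u ∈ P, coeff f u = Pi.single n (coeff f a n)}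
  zero_mem' n := ⟨0, P.zero_mem, by simp [coeff, act]⟩
  add_mem' := by
    intro a b ha hb n
    obtain ⟨u, hu, hua⟩ := ha n
    obtain ⟨v, hv, hvb⟩ := hb n
    exact ⟨u + v, P.add_mem hu hv, by rw [coeff_add, hua, hvb, coeff_add, ← Pi.single_add]; rfl⟩
  smul_mem' := by
    intro r a ha n
    obtain ⟨u, hu, hua⟩ := ha n
    have hr : ∀ b : GWA k f, coeff f (r • b) = r • coeff f b := fun b => by simp [coeff, act]
    refine ⟨r • u, ?_, by rw [hr, hua, hr, ← Pi.single_smul]; rfl⟩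
    rw [Algebra.smul_def, Algebra.commutes]
    exact mul_mem_right hu _

lemma mem_componentsIn (hgr : P = Submodule.span (GWA k f)ᵐᵒᵖ
      {m | m ∈ P ∧ ∃ n : ℤ, m ∈ gwaComp k f n}) {p : GWA k f} (hp : p ∈ P) :
    p ∈ componentsIn P := by
  rw [hgr] at hp
  induction hp using Submodule.span_induction with
  | mem m hm =>
    obtain ⟨hmP, n, hmn⟩ := hm
    obtain ⟨q, rfl⟩ := exists_of_mem_comp f hmn
    intro j
    rcases eq_or_ne j n with rfl | hj
    · exact ⟨_, hmP, by simp [coeff_ofCoeff_single]⟩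
    · refine ⟨0, P.zero_mem, ?_⟩
      rw [coeff_ofCoeff_single, Pi.single_eq_of_ne hj]
      simp [coeff, act]
  | zero => exact (componentsIn P).zero_mem
  | add a b _ _ ha hb => exact (componentsIn P).add_mem ha hb
  | smul r a _ ha =>
    refine mul_mem_of_generators f (componentsIn P) ?_ ?_ ?_ r.unop a ha
    · intro a ha n
      obtain ⟨u, hu, hua⟩ := ha (n - 1)
      refine ⟨u * gwaX k f, mul_mem_right hu _, ?_⟩
      ext1 j
      rw [coeff_mul_X, coeff_mul_X, hua]
      rcases eq_or_ne j n with rfl | hj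
      · simp
      · rw [Pi.single_eq_of_ne hj, Pi.single_eq_of_ne (by omega)]
    · intro a ha n
      obtain ⟨u, hu, hua⟩ := ha (n + 1)
      refine ⟨u * gwaY k f, mul_mem_right hu _, ?_⟩
      ext1 j
      rw [coeff_mul_Y, coeff_mul_Y, hua]
      rcases eq_or_ne j n with rfl | hj
      · simp
      · rw [Pi.single_eq_of_ne hj, Pi.single_eq_of_ne (by omega), zero_mul]
    · intro a ha n
      obtain ⟨u, hu, hua⟩ := ha n
      refine ⟨u * gwaZ k f, mul_mem_right hu _, ?_⟩
      ext1 j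
      rw [coeff_mul_Z, coeff_mul_Z, hua]
      rcases eq_or_ne j n with rfl | hj
      · simp
      · rw [Pi.single_eq_of_ne hj, Pi.single_eq_of_ne hj, zero_mul]

/-- Left multiplication by polynomials in `z` on a graded right ideal. -/
def leftMul (hgr : P = Submodule.span (GWA k f)ᵐᵒᵖ
      {m | m ∈ P ∧ ∃ n : ℤ, m ∈ gwaComp k f n}) : k[X] →+* Module.End (GWA k f)ᵐᵒᵖ P where
  toFun s := (mulLeft (aeval (gwaZ k f) s)).restrict fun _ hp => aeval_mul_mem hgr s hp
  map_one' := by ext p; simp [mulLeft_apply]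
  map_zero' := by ext p; simp [mulLeft_apply]
  map_mul' s t := by ext p; simp [mulLeft_apply, mul_assoc]; rfl
  map_add' s t := by ext p; simp [mulLeft_apply, add_mul]; rfl

/-- If `s P ⊆ u A` with `u ∈ P` left regular, then multiplication by `s` on `P` factors through
the regular module. -/
lemma exists_factor (hgr : P = Submodule.span (GWA k f)ᵐᵒᵖ
      {m | m ∈ P ∧ ∃ n : ℤ, m ∈ gwaComp k f n}) {u : GWA k f} (hu : u ∈ P)
    (hreg : ∀ b, u * b = 0 → b = 0) {s : k[X]}
    (hs : ∀ p ∈ P, ∃ b, u * b = aeval (gwaZ k f) s * p) :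
    ∃ (i : P →ₗ[(GWA k f)ᵐᵒᵖ] (GWA k f)ᵐᵒᵖ) (r : (GWA k f)ᵐᵒᵖ →ₗ[(GWA k f)ᵐᵒᵖ] P),
      r.comp i = leftMul hgr s := by
  have hinj : ∀ b c, u * b = u * c → b = c := fun b c h =>
    sub_eq_zero.1 (hreg _ (by rw [mul_sub, h, sub_self]))
  choose b hb using fun p : P => hs p p.2
  refine ⟨{ toFun := fun p => op (b p), map_add' := fun p q => ?_, map_smul' := fun a p => ?_ },
    LinearMap.toSpanSingleton _ _ ⟨u, hu⟩, ?_⟩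
  · rw [← op_add]
    exact congrArg op (hinj _ _ (by rw [mul_add, hb, hb, hb, ← mul_add]; rfl))
  · rw [RingHom.id_apply]
    refine unop_injective (hinj _ _ ?_)
    change u * b (a • p) = u * (b p * a.unop)
    rw [← mul_assoc, hb, hb, mul_assoc]
    rfl
  · ext p
    exact hb p

/-- The ideal of left coefficients of the degree-`n` component of a graded right ideal. -/
def coeffIdeal (hgr : P = Submodule.span (GWA k f)ᵐᵒᵖ
      {m | m ∈ P ∧ ∃ n : ℤ, m ∈ gwaComp k f n}) (n : ℤ) : Ideal k[X] where
  carrier := {h | ∃ u ∈ P, coeff f u = Pi.single n h}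
  zero_mem' := ⟨0, P.zero_mem, by simp [coeff, act]⟩
  add_mem' := by
    rintro g h ⟨u, hu, hug⟩ ⟨v, hv, hvh⟩
    exact ⟨u + v, P.add_mem hu hv, by rw [coeff_add, hug, hvh, Pi.single_add]⟩
  smul_mem' := by
    rintro s h ⟨u, hu, huh⟩
    exact ⟨_, aeval_mul_mem hgr s hu, by rw [coeff_aeval_mul, huh, Pi.single_smul]⟩

variable (hgr : P = Submodule.span (GWA k f)ᵐᵒᵖ {m | m ∈ P ∧ ∃ n : ℤ, m ∈ gwaComp k f n})

lemma coeff_mem_coeffIdeal {p : GWA k f} (hp : p ∈ P) (n : ℤ) :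
    coeff f p n ∈ coeffIdeal hgr n := mem_componentsIn hgr hp n

lemma mem_of_coeff_eq_single (hf : f ≠ 0) {a : GWA k f} {n : ℤ} {h : k[X]}
    (ha : coeff f a = Pi.single n h) (hh : h ∈ coeffIdeal hgr n) : a ∈ P := by
  obtain ⟨u, hu, huh⟩ := hh
  rwa [coeff_injective f hf (ha.trans huh.symm)]

lemma coeff_mul_X_of_single {a : GWA k f} {n : ℤ} {h : k[X]} (ha : coeff f a = Pi.single n h) :
    coeff f (a * gwaX k f) = Pi.single (n + 1) h := by
  ext1 j
  rw [coeff_mul_X, ha]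
  rcases eq_or_ne j (n + 1) with rfl | hj
  · simp
  · rw [Pi.single_eq_of_ne hj, Pi.single_eq_of_ne (by omega)]

lemma coeff_mul_Z_of_single {a : GWA k f} {n : ℤ} {h : k[X]} (ha : coeff f a = Pi.single n h) :
    coeff f (a * gwaZ k f) = Pi.single n (h * (X + C (n : k))) := by
  ext1 j
  rw [coeff_mul_Z, ha]
  rcases eq_or_ne j n with rfl | hj
  · simp
  · rw [Pi.single_eq_of_ne hj, Pi.single_eq_of_ne hj, zero_mul]

lemma coeff_mul_Y_pow_of_single {a : GWA k f} {n : ℤ} {h : k[X]}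
    (ha : coeff f a = Pi.single n h) (m : ℕ) :
    coeff f (a * gwaY k f ^ m) = Pi.single (n - m) (h * beta f n (n - m)) := by
  ext1 j
  rw [coeff_mul_Y_pow, ha]
  rcases eq_or_ne j (n - m) with rfl | hj
  · simp
  · rw [Pi.single_eq_of_ne hj, Pi.single_eq_of_ne (by omega), zero_mul]

lemma coeffIdeal_le_succ (n : ℤ) : coeffIdeal hgr n ≤ coeffIdeal hgr (n + 1) := by
  rintro h ⟨u, hu, huh⟩
  exact ⟨_, mul_mem_right hu _, coeff_mul_X_of_single huh⟩

lemma mul_shift_mem_coeffIdeal {n : ℤ} {h : k[X]} (hh : h ∈ coeffIdeal hgr (n + 1)) :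
    h * shift f n ∈ coeffIdeal hgr n := by
  obtain ⟨u, hu, huh⟩ := hh
  refine ⟨u * gwaY k f ^ 1, mul_mem_right hu _, ?_⟩
  have e : n + 1 - ((1 : ℕ) : ℤ) = n := by simp
  rw [coeff_mul_Y_pow_of_single huh, e, beta_succ f (by omega), beta_of_le f le_rfl, mul_one]

lemma beta_dvd_of_mem_coeffIdeal {n : ℤ} {h : k[X]} (hh : h ∈ coeffIdeal hgr n) :
    beta f 0 n ∣ h := by
  obtain ⟨u, hu, huh⟩ := hh
  simpa [huh] using beta_dvd_coeff f u n

lemma coeffIdeal_ne_bot (hf : f ≠ 0) (hP : P ≠ ⊥) (n : ℤ) : coeffIdeal hgr n ≠ ⊥ := by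
  obtain ⟨p, hp, hp0⟩ := P.ne_bot_iff.1 hP
  obtain ⟨m, hm⟩ : ∃ m, coeff f p m ≠ 0 := by
    by_contra! h
    exact hp0 (coeff_injective f hf ((funext h).trans (by simp [coeff, act]; rfl)))
  have hbase : coeffIdeal hgr m ≠ ⊥ := fun h => hm (by
    simpa [h] using coeff_mem_coeffIdeal hgr hp m)
  induction n using Int.inductionOn' (b := m) with
  | zero => exact hbase
  | succ i _ ih => exact fun h => ih (le_bot_iff.1 (h ▸ coeffIdeal_le_succ hgr i))
  | pred i _ ih =>
    obtain ⟨h, hh, h0⟩ := (Submodule.ne_bot_iff _).1 ih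
    refine (Submodule.ne_bot_iff _).2 ⟨_, mul_shift_mem_coeffIdeal hgr (n := i - 1)
      (by rwa [sub_add_cancel]), mul_ne_zero h0 (shift_ne_zero f hf _)⟩

/-- The homogeneous generators of a nonzero graded right ideal form a divisor chain. -/
lemma exists_generators (hf : f ≠ 0) (hP : P ≠ ⊥) :
    ∃ q d d' : ℤ → k[X], (∀ n, q n ≠ 0) ∧ (∀ n h, h ∈ coeffIdeal hgr n ↔ q n ∣ h) ∧
      (∀ n, q n = q (n + 1) * d n) ∧ (∀ n, shift f n = d n * d' n) := by
  let q : ℤ → k[X] := fun n => Submodule.IsPrincipal.generator (coeffIdeal hgr n)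
  have hq : ∀ n h, h ∈ coeffIdeal hgr n ↔ q n ∣ h := fun n h =>
    Submodule.IsPrincipal.mem_iff_generator_dvd _
  have hq0 : ∀ n, q n ≠ 0 := fun n h => coeffIdeal_ne_bot hgr hf hP n
    ((Submodule.IsPrincipal.eq_bot_iff_generator_eq_zero _).2 h)
  have hd : ∀ n, q (n + 1) ∣ q n := fun n =>
    (hq _ _).1 (coeffIdeal_le_succ hgr n ((hq _ _).2 dvd_rfl))
  choose d hd using hd
  have hd' : ∀ n, d n ∣ shift f n := fun n => by
    have h := (hq _ _).1 (mul_shift_mem_coeffIdeal hgr ((hq (n + 1) _).2 dvd_rfl))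
    rwa [hd n, mul_dvd_mul_iff_left (hq0 _)] at h
  choose d' hd' using hd'
  exact ⟨q, d, d', hq0, hq, hd, hd'⟩

/-- If `s` times the degree-`j` generator is divisible by the degree-`j` coefficient of `u A` for
all `j`, then `s P ⊆ u A`. -/
lemma exists_mul_eq_aeval_mul {n : ℤ} {q : ℤ → k[X]}
    (hq : ∀ n h, h ∈ coeffIdeal hgr n ↔ q n ∣ h) (hf : f ≠ 0) (hq0 : q n ≠ 0)
    {u : GWA k f} (hu : coeff f u = Pi.single n (q n)) {s : k[X]}
    (hs : ∀ j, q n * beta f n j ∣ s * q j) {p : GWA k f} (hp : p ∈ P) :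
    ∃ b, u * b = aeval (gwaZ k f) s * p := by
  have hw : ∀ j, ∃ w, s * coeff f p j = q n * beta f n j * w := fun j =>
    (hs j).trans (mul_dvd_mul_left s ((hq _ _).1 (coeff_mem_coeffIdeal hgr hp j)))
  choose w hw using hw
  have hfin : (fun i => (w (i + n)).comp (X - C (n : k))).support.Finite := by
    refine ((coeff_support_finite f p).preimage (add_left_injective n).injOn).subset
      fun i hi => ?_
    rw [Set.mem_preimage, Function.mem_support]
    intro h0
    have h := hw (i + n)
    rw [h0, mul_zero] at h
    have hwi : w (i + n) = 0 := by
      simpa [hq0, beta_ne_zero f hf] using h.symm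
    exact hi (by simp [hwi])
  refine ⟨ofCoeff f (Finsupp.ofSupportFinite _ hfin), coeff_injective f hf (funext fun j => ?_)⟩
  rw [coeff_mul, hu, act_ofCoeff_single, coeff_aeval_mul, Pi.smul_apply, smul_eq_mul, hw]
  have hc : ((Finsupp.ofSupportFinite _ hfin) (j - n)).comp (X + C (n : k)) = w j := by
    change ((w (j - n + n)).comp (X - C (n : k))).comp (X + C (n : k)) = w j
    rw [comp_assoc, sub_add_cancel]
    simp
  rw [hc]
  ring

end GWA
/-! ### Congruent roots -/

namespace GWA

open MulOpposite RightIdeal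

section Congruent

variable {k : Type} [Field k] (a : ℕ)

/-- The polynomial `z(z+a)`. -/
abbrev congPoly (k : Type) [Field k] (a : ℕ) : k[X] := X * (X + C (a : k))

lemma congPoly_ne_zero : congPoly k a ≠ 0 := mul_ne_zero X_ne_zero (X_add_C_ne_zero _)

lemma shift_congPoly (i : ℤ) :
    shift (congPoly k a) i = (X + C (i : k)) * (X + C ((i + a : ℤ) : k)) := by
  simp [shift, congPoly, add_assoc]

lemma eval_shift_congPoly (i : ℤ) (l : k) :
    (shift (congPoly k a) i).eval l = (l + i) * (l + i + a) := by
  simp [shift_congPoly, add_assoc]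

/-- The right ideal `(y^a, x, z)A`. -/
abbrev congIdeal (k : Type) [Field k] (a : ℕ) :
    Submodule (GWA k (congPoly k a))ᵐᵒᵖ (GWA k (congPoly k a)) :=
  Submodule.span _ {gwaY k (congPoly k a) ^ a, gwaX k (congPoly k a), gwaZ k (congPoly k a)}

lemma X_add_C_intCast_ne_zero (n : ℤ) : (X + C (n : k) : k[X]) ≠ 0 := X_add_C_ne_zero _

lemma eq_zero_of_mul_Z (f : k[X]) (hf : f ≠ 0) {c : GWA k f} (h : c * gwaZ k f = 0) : c = 0 := by
  refine coeff_injective f hf (funext fun n => ?_)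
  have hn := congrFun (congrArg (coeff f) h) n
  have h0 : ∀ n, coeff f 0 n = 0 := fun n => by simp [coeff, act]
  rw [coeff_mul_Z, h0, mul_eq_zero, or_iff_left (X_add_C_intCast_ne_zero n)] at hn
  rw [hn, h0]

lemma Z_mul_X (f : k[X]) : gwaZ k f * gwaX k f = gwaX k f * aeval (gwaZ k f) (X - C (1 : k)) := by
  rw [map_sub, aeval_X, aeval_C, mul_sub, X_mul_Z, map_one]
  noncomm_ring

lemma Z_mul_Y_pow (f : k[X]) (m : ℕ) :
    gwaZ k f * gwaY k f ^ m = gwaY k f ^ m * aeval (gwaZ k f) (X + C (m : k)) := by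
  rw [map_add, aeval_X, aeval_C, mul_add, Y_pow_mul_Z, ← Algebra.commutes, ← add_mul]
  simp

/-- `Ext¹(A / (y^a, x, z)A, A) = 0`: homomorphisms from `(y^a, x, z)A` to `A` are left
multiplications. -/
lemma exists_eq_mul_of_hom (ψ : congIdeal k a →ₗ[(GWA k (congPoly k a))ᵐᵒᵖ] GWA k (congPoly k a)) :
    ∃ c, ∀ b : congIdeal k a, ψ b = c * b := by
  have hf : congPoly k a ≠ 0 := congPoly_ne_zero a
  have hY : gwaY k (congPoly k a) ^ a ∈ congIdeal k a := Submodule.subset_span (by simp)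
  have hX : gwaX k (congPoly k a) ∈ congIdeal k a := Submodule.subset_span (by simp)
  have hZ : gwaZ k (congPoly k a) ∈ congIdeal k a := Submodule.subset_span (by simp)
  have hψ : ∀ (b : congIdeal k a) (r : GWA k (congPoly k a))
      (h : (b : GWA k (congPoly k a)) * r ∈ congIdeal k a),
      ψ ⟨b * r, h⟩ = ψ b * r := fun b r _ => ψ.map_smul (op r) b
  set v := ψ ⟨_, hZ⟩ with hv
  set p := ψ ⟨_, hX⟩ with hp
  set w := ψ ⟨_, hY⟩ with hw
  have h1 : v * gwaX k (congPoly k a) = p * aeval (gwaZ k (congPoly k a)) (X - C (1 : k)) := by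
    rw [hv, hp, ← hψ _ _ (mul_mem_right hZ _), ← hψ _ _ (mul_mem_right hX _)]
    exact congrArg ψ (Subtype.ext (Z_mul_X (congPoly k a)))
  have h2 : v * gwaY k (congPoly k a) ^ a = w * aeval (gwaZ k (congPoly k a)) (X + C (a : k)) := by
    rw [hv, hw, ← hψ _ _ (mul_mem_right hZ _), ← hψ _ _ (mul_mem_right hY _)]
    exact congrArg ψ (Subtype.ext (Z_mul_Y_pow (congPoly k a) a))
  have hcoeff1 : ∀ n : ℤ, coeff (congPoly k a) v n =
      coeff (congPoly k a) p (n + 1) * (X + C (n : k)) := fun n => by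
    have := congrFun (congrArg (coeff (congPoly k a)) h1) (n + 1)
    rw [coeff_mul_X, add_sub_cancel_right, coeff_mul_aeval] at this
    rw [this]
    simp [add_sub_assoc]
  have hcoeff2 : ∀ n : ℤ, coeff (congPoly k a) v n * beta (congPoly k a) n (n - a) =
      coeff (congPoly k a) w (n - a) * (X + C (n : k)) := fun n => by
    have := congrFun (congrArg (coeff (congPoly k a)) h2) (n - a)
    rw [coeff_mul_Y_pow, sub_add_cancel, coeff_mul_aeval] at this
    rw [this]
    congr 1
    simp [add_assoc]
  have hdiv : ∀ n, beta (congPoly k a) 0 n ∣ coeff (congPoly k a) p (n + 1) := by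
    intro n
    rcases le_or_gt 0 n with hn | hn
    · rw [beta_of_le (congPoly k a) hn]
      exact one_dvd _
    · have h3 := hcoeff2 n
      rw [hcoeff1, mul_right_comm] at h3
      have h4 := mul_right_cancel₀ (X_add_C_intCast_ne_zero n) h3
      have h5 := beta_dvd_coeff (congPoly k a) w (n - a)
      rw [← h4, beta_mul (congPoly k a) (by omega : n - a ≤ n) hn.le, mul_comm] at h5
      exact (mul_dvd_mul_iff_right (beta_ne_zero (congPoly k a) hf _ _)).1 h5
  obtain ⟨c, hc⟩ := exists_coeff_eq (congPoly k a)
    ((coeff_support_finite (congPoly k a) p).preimage (add_left_injective 1).injOn) hdiv hf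
  have hcv : c * gwaZ k (congPoly k a) = v := coeff_injective (congPoly k a) hf (funext fun n => by
    rw [coeff_mul_Z, hc, hcoeff1])
  have hcp : c * gwaX k (congPoly k a) = p := coeff_injective (congPoly k a) hf (funext fun n => by
    simp [coeff_mul_X, hc])
  have hcw : c * gwaY k (congPoly k a) ^ a = w := coeff_injective (congPoly k a) hf (funext fun n => by
    have h3 := hcoeff2 (n + a)
    rw [add_sub_cancel_right, hcoeff1, mul_right_comm] at h3
    rw [coeff_mul_Y_pow, hc]
    exact mul_right_cancel₀ (X_add_C_intCast_ne_zero _) h3)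
  refine ⟨c, fun ⟨b, hb⟩ => ?_⟩
  induction hb using Submodule.span_induction with
  | mem b hb =>
    rcases hb with rfl | rfl | rfl
    exacts [hcw.symm, hcp.symm, hcv.symm]
  | zero => rw [mul_zero]; exact ψ.map_zero
  | add b b' hb hb' h h' =>
    rw [mul_add, ← h, ← h', ← map_add]
    rfl
  | smul r b hb h =>
    rw [mul_smul_comm, ← h, ← map_smul]
    rfl

variable {a} {P : Submodule (GWA k (congPoly k a))ᵐᵒᵖ (GWA k (congPoly k a))}

lemma eval_ne_zero_of_hom_eq_zero
    (hgr : P = Submodule.span (GWA k (congPoly k a))ᵐᵒᵖ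
      {m | m ∈ P ∧ ∃ n : ℤ, m ∈ gwaComp k (congPoly k a) n}) (ha : 0 < a)
    (hHom : ∀ φ : (GWA k (congPoly k a) ⧸ congIdeal k a) →ₗ[(GWA k (congPoly k a))ᵐᵒᵖ]
      (GWA k (congPoly k a) ⧸ P), φ = 0)
    {q d d' : ℤ → k[X]} (hq0 : ∀ n, q n ≠ 0)
    (hq : ∀ n h, h ∈ coeffIdeal hgr n ↔ q n ∣ h) (hd : ∀ n, q n = q (n + 1) * d n)
    (hd' : ∀ n, shift (congPoly k a) n = d n * d' n) (m : ℤ)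
    (hdm : (d m).eval (-m : k) = 0) : (d' (m - a)).eval (-m : k) ≠ 0 := by
  intro hdm'
  have hf : congPoly k a ≠ 0 := congPoly_ne_zero a
  have hroot : ∀ g : k[X], g.eval (-m : k) = 0 → X + C (m : k) ∣ g := fun g hg => by
    have := dvd_iff_isRoot.2 hg
    simpa using this
  obtain ⟨e, he⟩ := hroot _ hdm
  obtain ⟨e', he'⟩ := hroot _ hdm'
  have hXm := X_add_C_intCast_ne_zero (k := k) m
  set v := q (m + 1) * e with hv
  have hqv : q m = v * (X + C (m : k)) := by rw [hd, he, hv]; ring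
  have hshift : shift (congPoly k a) (m - a) = (X + C (m : k)) * (d (m - a) * e') := by
    rw [hd', he']; ring
  have hchain : ∀ i : ℕ, q (m - i) ∣ q m * beta (congPoly k a) m (m - i) := by
    intro i
    induction i with
    | zero => simp [beta_of_le]
    | succ i ih =>
      have e1 : m - ((i + 1 : ℕ) : ℤ) = m - i - 1 := by push_cast; ring
      rw [e1, hd, beta_succ (congPoly k a) (by omega), sub_add_cancel, hd']
      obtain ⟨r, hr⟩ := ih
      exact ⟨d' (m - i - 1) * r, by linear_combination d (m - i - 1) * d' (m - i - 1) * hr⟩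
  have hYdvd : q (m - a) ∣ v * beta (congPoly k a) m (m - a) := by
    obtain ⟨b, rfl⟩ : ∃ b, a = b + 1 := ⟨a - 1, by omega⟩
    have e1 : m - ((b + 1 : ℕ) : ℤ) = m - b - 1 := by push_cast; ring
    rw [e1] at hshift ⊢
    rw [hd, beta_succ _ (by omega), sub_add_cancel, hshift]
    obtain ⟨r, hr⟩ := hchain b
    rw [hqv] at hr
    exact ⟨e' * r, by linear_combination d (m - b - 1) * e' * hr⟩
  have hbv : beta (congPoly k a) 0 m ∣ v := by
    rcases le_or_gt 0 m with hm | hm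
    · rw [beta_of_le (congPoly k a) hm]
      exact one_dvd _
    · have h := beta_dvd_of_mem_coeffIdeal hgr ((hq _ _).2 hYdvd)
      rw [beta_mul (congPoly k a) (by omega : m - a ≤ m) hm.le, mul_comm] at h
      exact (mul_dvd_mul_iff_right (beta_ne_zero (congPoly k a) hf _ _)).1 h
  obtain ⟨w, hw⟩ := hbv
  obtain ⟨c, hc⟩ : ∃ c, coeff (congPoly k a) c = Pi.single m v :=
    ⟨_, by rw [coeff_ofCoeff_single (congPoly k a) m w, hw, mul_comm]⟩
  have hmap : congIdeal k a ≤ P.comap (mulLeft c) := by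
    rw [Submodule.span_le]
    rintro b (rfl | rfl | rfl)
    · exact mem_of_coeff_eq_single hgr hf (coeff_mul_Y_pow_of_single hc a) ((hq _ _).2 hYdvd)
    · exact mem_of_coeff_eq_single hgr hf (coeff_mul_X_of_single hc)
        ((hq _ _).2 (dvd_mul_right _ _))
    · exact mem_of_coeff_eq_single hgr hf (coeff_mul_Z_of_single hc)
        ((hq _ _).2 (by rw [← hqv]))
  have hcP : c ∈ P := by
    have h := LinearMap.congr_fun (hHom ((congIdeal k a).mapQ P (mulLeft c) hmap))
      ((congIdeal k a).mkQ 1)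
    simpa [mulLeft_apply] using h
  have hdvd : q m ∣ v := by
    have h := (hq _ _).1 (coeff_mem_coeffIdeal hgr hcP m)
    rwa [hc, Pi.single_eq_same] at h
  have hv0 : v ≠ 0 := fun h => hq0 m (by rw [hqv, h, zero_mul])
  have hunit : X + C (m : k) ∣ 1 := by
    rw [hqv] at hdvd
    exact (mul_dvd_mul_iff_left hv0).1 (by rwa [mul_one])
  exact not_isUnit_X_add_C _ (isUnit_of_dvd_one hunit)

lemma exists_degree_eval_ne_zero [CharZero k] (ha : 0 < a) {d d' : ℤ → k[X]}
    (hd' : ∀ n, shift (congPoly k a) n = d n * d' n)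
    (htype : ∀ m : ℤ, (d m).eval (-m : k) = 0 → (d' (m - a)).eval (-m : k) ≠ 0) (l : k) :
    ∃ n : ℤ, (∀ i, n ≤ i → (d i).eval l ≠ 0) ∧ (∀ i, i < n → (d' i).eval l ≠ 0) := by
  have heval : ∀ i, (d i).eval l * (d' i).eval l = (l + i) * (l + i + a) := fun i => by
    rw [← eval_mul, ← hd', eval_shift_congPoly]
  by_cases hl : ∃ m : ℤ, l = -m
  · obtain ⟨m, rfl⟩ := hl
    have ha0 : (a : k) ≠ 0 := Nat.cast_ne_zero.2 ha.ne'
    have hne : ∀ i, i ≠ m → i ≠ m - a →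
        (d i).eval (-m : k) ≠ 0 ∧ (d' i).eval (-m : k) ≠ 0 := by
      intro i hi hi'
      rw [← mul_ne_zero_iff, heval]
      have h1 : ((i - m : ℤ) : k) ≠ 0 := Int.cast_ne_zero.2 (sub_ne_zero.2 hi)
      have h2 : ((i - m + a : ℤ) : k) ≠ 0 := Int.cast_ne_zero.2 (by omega)
      push_cast at h1 h2
      refine mul_ne_zero ?_ ?_
      · convert h1 using 1; ring
      · convert h2 using 1; ring
    have hsimple : ∀ i : ℤ, (2 * (-m + i) + a : k) ≠ 0 → (d i).eval (-m : k) = 0 →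
        (d' i).eval (-m : k) ≠ 0 := by
      intro i hi h h'
      apply hi
      have hder := congrArg (fun p => (derivative p).eval (-m : k)) (hd' i)
      simp only [derivative_mul, eval_add, eval_mul, h, h', shift_congPoly] at hder
      simp at hder
      linear_combination hder
    have hs1 := hsimple m (by simpa using ha0)
    have hs2 := hsimple (m - a) (by
      push_cast
      intro h
      exact ha0 (by linear_combination -h))
    by_cases h1 : (d m).eval (-m : k) = 0
    · refine ⟨m + 1, fun i hi => (hne i (by omega) (by omega)).1, fun i hi => ?_⟩
      rcases eq_or_ne i m with rfl | him
      · exact hs1 h1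
      rcases eq_or_ne i (m - a) with rfl | hima
      · exact htype m h1
      · exact (hne i him hima).2
    by_cases h2 : (d (m - a)).eval (-m : k) = 0
    · refine ⟨m, fun i hi => ?_, fun i hi => ?_⟩
      · rcases eq_or_ne i m with rfl | him
        · exact h1
        · exact (hne i him (by omega)).1
      · rcases eq_or_ne i (m - a) with rfl | hima
        · exact hs2 h2
        · exact (hne i (by omega) hima).2
    · refine ⟨m - a, fun i hi => ?_, fun i hi => (hne i (by omega) (by omega)).2⟩
      rcases eq_or_ne i m with rfl | him
      · exact h1
      rcases eq_or_ne i (m - a) with rfl | hima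
      · exact h2
      · exact (hne i him hima).1
  · push Not at hl
    have hne : ∀ i, (d i).eval l ≠ 0 ∧ (d' i).eval l ≠ 0 := by
      intro i
      rw [← mul_ne_zero_iff, heval]
      refine mul_ne_zero (fun h => hl i (by linear_combination h)) (fun h => hl (i + a) ?_)
      push_cast
      linear_combination h
    exact ⟨0, fun i _ => (hne i).1, fun i _ => (hne i).2⟩

/-- A graded right ideal `P` of `A(z(z+a))` with `Hom(A/(y^a, x, z)A, A/P) = 0` is projective. -/
lemma projective_of_hom_eq_zero [IsAlgClosed k] [CharZero k]
    (hgr : P = Submodule.span (GWA k (congPoly k a))ᵐᵒᵖ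
      {m | m ∈ P ∧ ∃ n : ℤ, m ∈ gwaComp k (congPoly k a) n}) (ha : 0 < a)
    (hHom : ∀ φ : (GWA k (congPoly k a) ⧸ congIdeal k a) →ₗ[(GWA k (congPoly k a))ᵐᵒᵖ]
      (GWA k (congPoly k a) ⧸ P), φ = 0) :
    Module.Projective (GWA k (congPoly k a))ᵐᵒᵖ P := by
  have hf : congPoly k a ≠ 0 := congPoly_ne_zero a
  rcases eq_or_ne P ⊥ with rfl | hP
  · infer_instance
  obtain ⟨q, d, d', hq0, hq, hd, hd'⟩ := exists_generators hgr hf hP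
  refine projective_of_factor_locally (M := P) (leftMul hgr) fun M hM => ?_
  obtain ⟨l, hl⟩ : ∃ l : k, ∀ s ∈ M, s.eval l = 0 := by
    obtain ⟨g, hg⟩ := (IsPrincipalIdealRing.principal M).principal
    have hg1 : g.degree ≠ 0 := by
      intro h
      refine hM.ne_top ?_
      rw [hg]
      exact Ideal.span_singleton_eq_top.2 (isUnit_iff_degree_eq_zero.2 h)
    obtain ⟨l, hl⟩ := IsAlgClosed.exists_root g hg1
    refine ⟨l, fun s hs => ?_⟩
    rw [hg] at hs
    obtain ⟨t, rfl⟩ := Ideal.mem_span_singleton.1 hs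
    rw [eval_mul, hl.eq_zero, zero_mul]
  obtain ⟨n, hn, hn'⟩ := exists_degree_eval_ne_zero ha hd'
    (eval_ne_zero_of_hom_eq_zero hgr ha hHom hq0 hq hd hd') l
  obtain ⟨s, hs, hsq⟩ := exists_mul_beta_dvd _ hf q d d' hq0 hd hd'
    (fun n => beta_dvd_of_mem_coeffIdeal hgr ((hq n _).2 dvd_rfl)) hn hn'
  obtain ⟨u, hu, huq⟩ := (hq n (q n)).2 dvd_rfl
  exact ⟨s, fun h => hs (hl s h), exists_factor hgr hu
    (fun b hb => mul_left_injective_of_coeff_single _ hf (hq0 n) huq hb)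
    fun p hp => exists_mul_eq_aeval_mul hgr hq hf (hq0 n) huq hsq hp⟩

end Congruent

end GWA

set_option maxHeartbeats 1000000 in
/-- Let `α ∈ ℕ⁺`, `f = z(z+α)`, and let `P` be a graded right ideal of
`A = A(f)`.  With `Z = A/(y^α, x, z)A` the finite-dimensional simple module, the
following are equivalent: (i) `P` is projective; (ii) `Ext¹_A(Z, P) = 0`, i.e. every
extension of `Z` by `P` splits; (iii) `Hom_A(Z, A/P) = 0`; (iv) `A/P` has projective
dimension at most 1. -/
theorem projective_tfae_congruent_root
    (k : Type) [Field k] [IsAlgClosed k] [CharZero k] (α : ℕ+)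
    (P : Submodule (Acong k α)ᵐᵒᵖ (Acong k α))
    -- `P` is a graded right ideal: it is generated by its homogeneous elements
    (hgr : P = Submodule.span (Acong k α)ᵐᵒᵖ
      {m | m ∈ P ∧ ∃ n : ℤ, m ∈ gwaComp k (X * (X + C (α : k))) n}) :
    List.TFAE [
      -- (i) P is projective
      Module.Projective (Acong k α)ᵐᵒᵖ ↥P,
      -- (ii) Ext¹_A(Z, P) = 0 : every extension of Z by P splits
      ∀ (E : Type) (_ : AddCommGroup E) (_ : Module (Acong k α)ᵐᵒᵖ E)
        (ι : ↥P →ₗ[(Acong k α)ᵐᵒᵖ] E)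
        (π : E →ₗ[(Acong k α)ᵐᵒᵖ] (Acong k α ⧸ Icong k α)),
        Function.Injective ι → Function.Surjective π →
        LinearMap.range ι = LinearMap.ker π →
        ∃ s : (Acong k α ⧸ Icong k α) →ₗ[(Acong k α)ᵐᵒᵖ] E, π.comp s = LinearMap.id,
      -- (iii) Hom_A(Z, A/P) = 0
      ∀ φ : (Acong k α ⧸ Icong k α) →ₗ[(Acong k α)ᵐᵒᵖ] (Acong k α ⧸ P), φ = 0,
      -- (iv) A/P has projective dimension at most 1
      ∃ (Q : Type) (_ : AddCommGroup Q) (_ : Module (Acong k α)ᵐᵒᵖ Q)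
        (g : Q →ₗ[(Acong k α)ᵐᵒᵖ] (Acong k α ⧸ P)),
        Module.Projective (Acong k α)ᵐᵒᵖ Q ∧ Function.Surjective g ∧
        Module.Projective (Acong k α)ᵐᵒᵖ ↥(LinearMap.ker g)] := by
  have hf : GWA.congPoly k α ≠ 0 := GWA.congPoly_ne_zero _
  have hI := GWA.exists_eq_mul_of_hom (k := k) (α : ℕ)
  have hreg : ∃ z ∈ Icong k α, ∀ c : Acong k α, c * z = 0 → c = 0 :=
    ⟨_, Submodule.subset_span (by simp), fun _ h => GWA.eq_zero_of_mul_Z _ hf h⟩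
  tfae_have 1 ↔ 4 := RightIdeal.projective_iff_exists_resolution
  tfae_have 1 → 2 := by
    intro _ E _ _ ι π
    exact RightIdeal.exists_section (M := P)
      (RightIdeal.exists_extension_of_projective hI hreg) ι π
  tfae_have 2 → 3 := RightIdeal.hom_eq_zero_of_extensions_split hreg
  tfae_have 3 → 1 := GWA.projective_of_hom_eq_zero hgr α.pos
  tfae_finish

end
end
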